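/- Let N ≥ 2, let A > 0, and let K > 0. Then there exists a constant C > 0 (depending only on N, A and K) such that for every ε ∈ (0,1] and every Lipschitz function u on the open unit ball B₁(0) ⊂ ℝ^N with ∫_{B₁(0)} u² dx ≤ K that satisfies the distributional inequalities ±Δu ≤ A( (1/ε)χ_{{|u−1|<ε}} + 1 ), meaning that for every nonnegative smooth compactly supported φ : B₁(0) → ℝ one has ± ∫_{B₁(0)} u Δφ dx ≤ A ∫_{B₁(0)} ( (1/ε)χ_{{|u−1|<ε}}(x) + 1 ) φ(x) dx, the bound |∇u(x)| ≤ C holds for almost every x in the ball B_{1/2}(0). -/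

import Mathlib

open MeasureTheory Metric Set

/-- The Laplacian: sum of second partial derivatives. -/
noncomputable def lap {N : ℕ} (u : EuclideanSpace ℝ (Fin N) → ℝ)
    (x : EuclideanSpace ℝ (Fin N)) : ℝ :=
  ∑ i : Fin N, fderiv ℝ (fun y => fderiv ℝ u y (EuclideanSpace.single i 1)) x
    (EuclideanSpace.single i 1)

open Filter Topology

/-- `f` has first derivative `f1` and second derivative `f2` at `0`. -/
def HasD2 (f : ℝ → ℝ) (f1 f2 : ℝ) : Prop :=
  ∃ g : ℝ → ℝ, (∀ᶠ s in 𝓝 (0 : ℝ), HasDerivAt f (g s) s) ∧ g 0 = f1 ∧ HasDerivAt g f2 0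

namespace HasD2

variable {f h : ℝ → ℝ} {f1 f2 h1 h2 : ℝ}

theorem hasDerivAt (hf : HasD2 f f1 f2) : HasDerivAt f f1 0 := by
  obtain ⟨g, hg, rfl, -⟩ := hf
  exact hg.self_of_nhds

theorem continuousAt (hf : HasD2 f f1 f2) : ContinuousAt f 0 := hf.hasDerivAt.continuousAt

theorem add (hf : HasD2 f f1 f2) (hh : HasD2 h h1 h2) :
    HasD2 (fun s => f s + h s) (f1 + h1) (f2 + h2) := by
  obtain ⟨g, hg, rfl, hg2⟩ := hf
  obtain ⟨k, hk, rfl, hk2⟩ := hh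
  refine ⟨fun s => g s + k s, ?_, rfl, hg2.add hk2⟩
  filter_upwards [hg, hk] with s a b using a.add b

theorem const_mul (c : ℝ) (hf : HasD2 f f1 f2) :
    HasD2 (fun s => c * f s) (c * f1) (c * f2) := by
  obtain ⟨g, hg, rfl, hg2⟩ := hf
  refine ⟨fun s => c * g s, ?_, rfl, hg2.const_mul c⟩
  filter_upwards [hg] with s a using a.const_mul c

theorem neg (hf : HasD2 f f1 f2) : HasD2 (fun s => - f s) (-f1) (-f2) := by
  simpa using hf.const_mul (-1)

theorem sub (hf : HasD2 f f1 f2) (hh : HasD2 h h1 h2) :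
    HasD2 (fun s => f s - h s) (f1 - h1) (f2 - h2) := by
  simpa [sub_eq_add_neg] using hf.add hh.neg

theorem quad (c0 c1 c2 : ℝ) : HasD2 (fun s => c0 + c1 * s + c2 * s ^ 2) c1 (2 * c2) := by
  refine ⟨fun s => c1 + c2 * (2 * s), Eventually.of_forall fun s => ?_, by simp, ?_⟩
  · have := (((hasDerivAt_id' s).const_mul c1).const_add c0).add
      (((hasDerivAt_id' s).pow 2).const_mul c2)
    exact this.congr_deriv (by simp)
  · have := (((hasDerivAt_id' (0 : ℝ)).const_mul 2).const_mul c2).const_add c1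
    exact this.congr_deriv (by ring)

theorem const (c : ℝ) : HasD2 (fun _ => c) 0 0 := by
  simpa using quad c 0 0

theorem comp {G G1 : ℝ → ℝ} {G2 : ℝ} (hG : ∀ᶠ t in 𝓝 (f 0), HasDerivAt G (G1 t) t)
    (hG1 : HasDerivAt G1 G2 (f 0)) (hf : HasD2 f f1 f2) :
    HasD2 (fun s => G (f s)) (G1 (f 0) * f1) (G2 * f1 ^ 2 + G1 (f 0) * f2) := by
  have hc := hf.continuousAt
  have hd := hf.hasDerivAt
  obtain ⟨g, hg, rfl, hg2⟩ := hf
  refine ⟨fun s => G1 (f s) * g s, ?_, rfl, ?_⟩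
  · filter_upwards [hg, hc.eventually hG] with s a b
    exact b.comp s a
  · have h1 := (HasDerivAt.comp (0 : ℝ) hG1 hd).mul hg2
    exact h1.congr_deriv (by simp only [Function.comp]; ring)

theorem log (h0 : 0 < f 0) (hf : HasD2 f f1 f2) :
    HasD2 (fun s => Real.log (f s)) (f1 / f 0) (f2 / f 0 - (f1 / f 0) ^ 2) := by
  have := hf.comp (G := Real.log) (G1 := fun t => t⁻¹) (G2 := -(f 0 ^ 2)⁻¹)
    (by filter_upwards [lt_mem_nhds h0] with t ht using Real.hasDerivAt_log ht.ne')
    (hasDerivAt_inv h0.ne')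
  convert this using 1
  · field_simp
  · field_simp; ring

theorem exp (hf : HasD2 f f1 f2) :
    HasD2 (fun s => Real.exp (f s)) (Real.exp (f 0) * f1) (Real.exp (f 0) * (f2 + f1 ^ 2)) := by
  have := hf.comp (G := Real.exp) (G1 := Real.exp) (G2 := Real.exp (f 0))
    (Eventually.of_forall fun t => Real.hasDerivAt_exp t) (Real.hasDerivAt_exp _)
  convert this using 1
  ring

theorem congr (hf : HasD2 f f1 f2) (e : ∀ᶠ s in 𝓝 0, h s = f s) : HasD2 h f1 f2 := by
  obtain ⟨g, hg, rfl, hg2⟩ := hf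
  refine ⟨g, ?_, rfl, hg2⟩
  filter_upwards [hg, eventually_eventually_nhds.2 e] with s a b
  exact a.congr_of_eventuallyEq b

theorem unique (hf : HasD2 f f1 f2) (hh : HasD2 f h1 h2) : f1 = h1 ∧ f2 = h2 := by
  obtain ⟨g, hg, rfl, hg2⟩ := hf
  obtain ⟨k, hk, rfl, hk2⟩ := hh
  have e : g =ᶠ[𝓝 0] k := by
    filter_upwards [hg, hk] with s a b using a.unique b
  exact ⟨e.self_of_nhds, hg2.unique (hk2.congr_of_eventuallyEq e)⟩

theorem of_isLocalMax (hf : HasD2 f f1 f2) (hm : IsLocalMax f 0) : f1 = 0 ∧ f2 ≤ 0 := by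
  have h1 : f1 = 0 := hm.hasDerivAt_eq_zero hf.hasDerivAt
  refine ⟨h1, ?_⟩
  by_contra hpos
  push Not at hpos
  obtain ⟨g, hg, rfl, hg2⟩ := hf
  have hd : deriv f =ᶠ[𝓝 0] g := by
    filter_upwards [hg] with s a using a.deriv
  have hdd : deriv (deriv f) 0 = f2 := by
    rw [hd.deriv_eq]; exact hg2.deriv
  have hmin := isLocalMin_of_deriv_deriv_pos (f := f) (x₀ := 0) (by rw [hdd]; exact hpos)
    (by rw [hd.self_of_nhds]; exact h1) hg.self_of_nhds.continuousAt
  have hconst : f =ᶠ[𝓝 0] fun _ => f 0 := by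
    filter_upwards [hm, hmin] with s a b using le_antisymm a b
  have := hconst.eventually_nhds
  have hd0 : deriv f =ᶠ[𝓝 0] fun _ => 0 := by
    filter_upwards [this] with s a
    rw [Filter.EventuallyEq.deriv_eq a]; simp
  have : deriv (deriv f) 0 = 0 := by rw [hd0.deriv_eq]; simp
  linarith

end HasD2

section Lines
variable {N : ℕ}

/-- pure second derivative in direction `ξ`. -/
noncomputable def DD (v : EuclideanSpace ℝ (Fin N) → ℝ) (x ξ : EuclideanSpace ℝ (Fin N)) : ℝ :=
  fderiv ℝ (fun y => fderiv ℝ v y ξ) x ξ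

theorem lap_eq_DD (v : EuclideanSpace ℝ (Fin N) → ℝ) (x : EuclideanSpace ℝ (Fin N)) :
    lap v x = ∑ i, DD v x (EuclideanSpace.single i 1) := rfl

theorem hasD2_line {v : EuclideanSpace ℝ (Fin N) → ℝ} (hv : ContDiff ℝ 2 v)
    (x ξ : EuclideanSpace ℝ (Fin N)) :
    HasD2 (fun s : ℝ => v (x + s • ξ)) (fderiv ℝ v x ξ) (DD v x ξ) := by
  have hl : ∀ s : ℝ, HasDerivAt (fun s : ℝ => x + s • ξ) ξ s := fun s => by
    simpa using ((hasDerivAt_id s).smul_const ξ).const_add x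
  refine ⟨fun s => fderiv ℝ v (x + s • ξ) ξ, Eventually.of_forall fun s => ?_, by simp, ?_⟩
  · exact ((hv.differentiable (by norm_num)) (x + s • ξ)).hasFDerivAt.comp_hasDerivAt s (hl s)
  · have h1 : Differentiable ℝ (fun y => fderiv ℝ v y ξ) :=
      ((hv.fderiv_right (m := 1) (by norm_num)).differentiable (by norm_num)).clm_apply
        (differentiable_const ξ)
    have h2 := (h1 (x + (0 : ℝ) • ξ)).hasFDerivAt.comp_hasDerivAt (0 : ℝ) (hl 0)
    simpa [DD, Function.comp_def] using h2

theorem DD_eq {v : EuclideanSpace ℝ (Fin N) → ℝ} (hv : ContDiff ℝ 2 v)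
    (x ξ : EuclideanSpace ℝ (Fin N)) : DD v x ξ = fderiv ℝ (fderiv ℝ v) x ξ ξ := by
  have h1 : DifferentiableAt ℝ (fderiv ℝ v) x :=
    ((hv.fderiv_right (m := 1) (by norm_num)).differentiable (by norm_num)) x
  unfold DD
  rw [fderiv_clm_apply h1 (differentiableAt_const ξ)]
  simp

open InnerProductSpace in
theorem lap_eq_basis {ι : Type*} [Fintype ι] {v : EuclideanSpace ℝ (Fin N) → ℝ}
    (hv : ContDiff ℝ 2 v) (b : OrthonormalBasis ι ℝ (EuclideanSpace ℝ (Fin N)))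
    (x : EuclideanSpace ℝ (Fin N)) : lap v x = ∑ i, DD v x (b i) := by
  have key : ∀ {κ : Type _} [Fintype κ] (c : OrthonormalBasis κ ℝ (EuclideanSpace ℝ (Fin N))),
      ∑ i, DD v x (c i) = Laplacian.laplacian v x := by
    intro κ _ c
    rw [laplacian_eq_iteratedFDeriv_orthonormalBasis v c]
    simp only [iteratedFDeriv_two_apply]
    exact Finset.sum_congr rfl fun i _ => by rw [DD_eq hv]; simp
  have key2 : ∑ i, DD v x (b i) = Laplacian.laplacian v x := by
    rw [laplacian_eq_iteratedFDeriv_orthonormalBasis v b]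
    simp only [iteratedFDeriv_two_apply]
    exact Finset.sum_congr rfl fun i _ => by rw [DD_eq hv]; simp
  rw [key2, lap_eq_DD, ← key (EuclideanSpace.basisFun (Fin N) ℝ)]
  simp

/-- Laplacian at an interior local max. -/
theorem lap_nonpos_of_isLocalMax {v : EuclideanSpace ℝ (Fin N) → ℝ} (hv : ContDiff ℝ 2 v)
    {x : EuclideanSpace ℝ (Fin N)} (hm : IsLocalMax v x) : lap v x ≤ 0 := by
  rw [lap_eq_DD]
  refine Finset.sum_nonpos fun i _ => ?_
  refine ((hasD2_line hv x (EuclideanSpace.single i 1)).of_isLocalMax ?_).2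
  have hc : ContinuousAt (fun s : ℝ => x + s • (EuclideanSpace.single i (1:ℝ))) 0 := by fun_prop
  have : Tendsto (fun s : ℝ => x + s • (EuclideanSpace.single i (1:ℝ))) (𝓝 0) (𝓝 x) := by
    simpa [ContinuousAt] using hc
  filter_upwards [this.eventually hm] with s hs
  simpa using hs

end Lines


theorem hasDerivAt_maxsq (t : ℝ) : HasDerivAt (fun t : ℝ => (max t 0) ^ 2) (2 * max t 0) t := by
  rcases lt_trichotomy t 0 with h | h | h
  · rw [max_eq_right h.le]
    refine ((hasDerivAt_const t (0:ℝ)).congr_deriv (by simp)).congr_of_eventuallyEq ?_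
    filter_upwards [gt_mem_nhds h] with s hs
    simp [max_eq_right hs.le]
  · subst h
    rw [hasDerivAt_iff_isLittleO_nhds_zero]
    have : (fun h : ℝ => h ^ 2) =o[𝓝 0] (fun h : ℝ => h) := Asymptotics.isLittleO_pow_id one_lt_two
    refine Asymptotics.IsBigO.trans_isLittleO ?_ this
    refine Asymptotics.IsBigO.of_bound 1 (Eventually.of_forall fun h => ?_)
    simp
    exact pow_le_pow_left₀ (by simp) (max_le (le_abs_self h) (abs_nonneg h)) 2 |>.trans (by simp)
  · rw [max_eq_left h.le]
    have : HasDerivAt (fun t : ℝ => t ^ 2) (2 * t) t := by simpa using hasDerivAt_pow 2 t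
    refine this.congr_of_eventuallyEq ?_
    filter_upwards [lt_mem_nhds h] with s hs
    simp [max_eq_left hs.le]

section MV
variable {N : ℕ}

/-- quartic kernel -/
noncomputable def sig (z : EuclideanSpace ℝ (Fin N)) : ℝ := (max (1 - ‖z‖ ^ 2) 0) ^ 2
/-- its radial density -/
noncomputable def rh (z : EuclideanSpace ℝ (Fin N)) : ℝ := 4 * max (1 - ‖z‖ ^ 2) 0

theorem sig_nonneg (z : EuclideanSpace ℝ (Fin N)) : 0 ≤ sig z := by unfold sig; positivity
theorem rh_nonneg (z : EuclideanSpace ℝ (Fin N)) : 0 ≤ rh z := by unfold rh; positivity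
theorem rh_le (z : EuclideanSpace ℝ (Fin N)) : rh z ≤ 4 := by
  unfold rh
  have : max (1 - ‖z‖ ^ 2) 0 ≤ 1 := max_le (by nlinarith [norm_nonneg z]) zero_le_one
  linarith
theorem sig_le (z : EuclideanSpace ℝ (Fin N)) : sig z ≤ rh z := by
  unfold sig rh
  have : max (1 - ‖z‖ ^ 2) 0 ≤ 1 := max_le (by nlinarith [norm_nonneg z]) zero_le_one
  have : 0 ≤ max (1 - ‖z‖ ^ 2) 0 := le_max_right _ _
  nlinarith
theorem rh_eq_zero {z : EuclideanSpace ℝ (Fin N)} (h : 1 ≤ ‖z‖) : rh z = 0 := by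
  unfold rh
  rw [max_eq_right (by nlinarith)]; simp
theorem sig_eq_zero {z : EuclideanSpace ℝ (Fin N)} (h : 1 ≤ ‖z‖) : sig z = 0 := by
  unfold sig
  rw [max_eq_right (by nlinarith)]; simp
theorem le_rh {z : EuclideanSpace ℝ (Fin N)} (h : ‖z‖ ≤ 1 / 2) : 3 ≤ rh z := by
  unfold rh
  have : 3 / 4 ≤ max (1 - ‖z‖ ^ 2) 0 := le_max_of_le_left (by nlinarith [norm_nonneg z])
  linarith
theorem rh_cont : Continuous (rh (N := N)) := by unfold rh; fun_prop
theorem sig_cont : Continuous (sig (N := N)) := by unfold sig; fun_prop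
theorem rh_supp : HasCompactSupport (rh (N := N)) :=
  HasCompactSupport.intro (isCompact_closedBall 0 1) fun x hx => rh_eq_zero (by
    simp at hx; exact hx.le)
theorem sig_supp : HasCompactSupport (sig (N := N)) :=
  HasCompactSupport.intro (isCompact_closedBall 0 1) fun x hx => sig_eq_zero (by
    simp at hx; exact hx.le)

theorem hasFDerivAt_sig (z : EuclideanSpace ℝ (Fin N)) :
    HasFDerivAt (sig (N := N)) (-(rh z) • innerSL ℝ z) z := by
  have h1 : HasFDerivAt (fun z : EuclideanSpace ℝ (Fin N) => 1 - ‖z‖ ^ 2)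
      (-(2 • innerSL ℝ z)) z := (hasStrictFDerivAt_norm_sq z).hasFDerivAt.const_sub 1
  have := (hasDerivAt_maxsq (1 - ‖z‖ ^ 2)).comp_hasFDerivAt z h1
  refine this.congr_fderiv ?_
  ext y
  simp [rh]; ring

theorem int_rh {f : EuclideanSpace ℝ (Fin N) → ℝ} (hf : Continuous f) :
    Integrable (fun z => f z * rh z) volume :=
  (hf.mul rh_cont).integrable_of_hasCompactSupport rh_supp.mul_left
theorem int_sig {f : EuclideanSpace ℝ (Fin N) → ℝ} (hf : Continuous f) :
    Integrable (fun z => f z * sig z) volume :=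
  (hf.mul sig_cont).integrable_of_hasCompactSupport sig_supp.mul_left

theorem rh_integrable : Integrable (rh (N := N)) volume :=
  rh_cont.integrable_of_hasCompactSupport rh_supp

theorem rh_pos : 0 < ∫ z : EuclideanSpace ℝ (Fin N), rh z := by
  have : 0 < rh (0 : EuclideanSpace ℝ (Fin N)) := by simp [rh]
  exact rh_cont.integral_pos_of_hasCompactSupport_nonneg_nonzero rh_supp rh_nonneg this.ne'
end MV


section MV2
variable {N : ℕ}

theorem DD_cont {v : EuclideanSpace ℝ (Fin N) → ℝ} (hv : ContDiff ℝ 2 v)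
    (ξ : EuclideanSpace ℝ (Fin N)) : Continuous fun x => DD v x ξ := by
  simp_rw [DD_eq hv]
  have : Continuous (fderiv ℝ (fderiv ℝ v)) :=
    (hv.fderiv_right (m := 1) (by norm_num)).continuous_fderiv (by norm_num)
  exact (this.clm_apply continuous_const).clm_apply continuous_const

theorem lap_cont {v : EuclideanSpace ℝ (Fin N) → ℝ} (hv : ContDiff ℝ 2 v) :
    Continuous (lap v) := by
  have : lap v = fun x => ∑ i, DD v x (EuclideanSpace.single i 1) := rfl
  rw [this]
  exact continuous_finsetSum _ fun i _ => DD_cont hv _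

theorem ibp {w : EuclideanSpace ℝ (Fin N) → ℝ} (hw : ContDiff ℝ 2 w)
    (p : EuclideanSpace ℝ (Fin N)) (r : ℝ) :
    ∫ z, fderiv ℝ w (p + r • z) z * rh z = r * ∫ z, lap w (p + r • z) * sig z := by
  have hdc : Continuous (fderiv ℝ w) := hw.continuous_fderiv (by norm_num)
  have hl : Continuous fun z : EuclideanSpace ℝ (Fin N) => p + r • z := by fun_prop
  have h1 : ∀ i : Fin N, ∫ z, fderiv ℝ w (p + r • z) (EuclideanSpace.single i 1) * (z i * rh z)
      = ∫ z, r * DD w (p + r • z) (EuclideanSpace.single i 1) * sig z := by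
    intro i
    set e : EuclideanSpace ℝ (Fin N) := EuclideanSpace.single i 1 with he
    set f : EuclideanSpace ℝ (Fin N) → ℝ := fun z => fderiv ℝ w (p + r • z) e with hf
    have hfd : ∀ z, HasFDerivAt f (r • fderiv ℝ (fun y => fderiv ℝ w y e) (p + r • z)) z := by
      intro z
      have h1 : Differentiable ℝ (fun y => fderiv ℝ w y e) :=
        ((hw.fderiv_right (m := 1) (by norm_num)).differentiable (by norm_num)).clm_apply
          (differentiable_const e)
      have h2 : HasFDerivAt (fun z : EuclideanSpace ℝ (Fin N) => p + r • z)
          (r • ContinuousLinearMap.id ℝ (EuclideanSpace ℝ (Fin N))) z :=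
        ((hasFDerivAt_id z).const_smul r).const_add p
      refine ((h1 (p + r • z)).hasFDerivAt.comp z h2).congr_fderiv ?_
      ext y; simp
    have hfe : ∀ z, fderiv ℝ f z e = r * DD w (p + r • z) e := by
      intro z; rw [(hfd z).fderiv]; simp [DD]
    have hse : ∀ z, fderiv ℝ sig z e = - (z i * rh z) := by
      intro z; rw [(hasFDerivAt_sig z).fderiv]
      simp [he, EuclideanSpace.inner_single_right]; ring
    have hfc : Continuous f := (hdc.comp hl).clm_apply continuous_const
    have hzi : Continuous fun z : EuclideanSpace ℝ (Fin N) => z i := by fun_prop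
    have key := integral_mul_fderiv_eq_neg_fderiv_mul_of_integrable (μ := volume) (f := f)
      (g := sig) (v := e)
      (by simp_rw [hfe]; exact int_sig (((DD_cont hw e).comp hl).const_mul r))
      (by
        simp_rw [hse]
        have := int_rh ((hfc.mul hzi).neg)
        refine this.congr (Eventually.of_forall fun z => ?_)
        simp; ring)
      (int_sig hfc) (fun z _ => (hfd z).differentiableAt)
      (fun z _ => (hasFDerivAt_sig z).differentiableAt)
    simp_rw [hfe, hse] at key
    simp only [mul_neg, integral_neg, neg_inj] at key
    exact key
  have h2 : ∀ z : EuclideanSpace ℝ (Fin N), fderiv ℝ w (p + r • z) z * rh z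
      = ∑ i, fderiv ℝ w (p + r • z) (EuclideanSpace.single i 1) * (z i * rh z) := by
    intro z
    have hz : z = ∑ i, z i • (EuclideanSpace.single i (1:ℝ)) := by
      simpa using ((EuclideanSpace.basisFun (Fin N) ℝ).sum_repr z).symm
    conv_lhs => rw [show fderiv ℝ w (p + r • z) z = fderiv ℝ w (p + r • z)
      (∑ i, z i • (EuclideanSpace.single i (1:ℝ))) from by rw [← hz]]
    rw [map_sum, Finset.sum_mul]
    refine Finset.sum_congr rfl fun i _ => ?_
    rw [map_smul, smul_eq_mul]; ring
  simp_rw [h2]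
  rw [integral_finsetSum, ← integral_const_mul]
  · simp_rw [h1]
    rw [← integral_finsetSum]
    · refine integral_congr_ae (Eventually.of_forall fun z => ?_)
      simp only [lap_eq_DD, Finset.sum_mul, Finset.mul_sum]
      exact Finset.sum_congr rfl fun i _ => by ring
    · intro i _
      exact int_sig (((DD_cont hw _).comp hl).const_mul r)
  · intro i _
    have hzi : Continuous fun z : EuclideanSpace ℝ (Fin N) => z i := by fun_prop
    have hfc : Continuous fun z => fderiv ℝ w (p + r • z) (EuclideanSpace.single i 1) :=
      (hdc.comp hl).clm_apply continuous_const
    refine (int_rh (hfc.mul hzi)).congr (Eventually.of_forall fun z => ?_)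
    simp; ring

theorem hasDerivAt_V {w : EuclideanSpace ℝ (Fin N) → ℝ} (hw : ContDiff ℝ 2 w)
    (p : EuclideanSpace ℝ (Fin N)) (r : ℝ) :
    HasDerivAt (fun r : ℝ => ∫ z, w (p + r • z) * rh z)
      (r * ∫ z, lap w (p + r • z) * sig z) r := by
  rw [← ibp hw]
  have hdc : Continuous (fderiv ℝ w) := hw.continuous_fderiv (by norm_num)
  obtain ⟨M, hM⟩ := (isCompact_closedBall p (|r| + 1)).exists_bound_of_continuousOn
    hdc.continuousOn
  refine (hasDerivAt_integral_of_dominated_loc_of_deriv_le (s := ball r 1) (μ := volume)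
    (F := fun (s : ℝ) z => w (p + s • z) * rh z)
    (F' := fun (s : ℝ) z => fderiv ℝ w (p + s • z) z * rh z)
    (bound := fun z => M * rh z) (ball_mem_nhds r one_pos) ?_ ?_ ?_ ?_ ?_ ?_).2
  · refine Eventually.of_forall fun s => (int_rh ?_).aestronglyMeasurable
    exact hw.continuous.comp (by fun_prop)
  · exact int_rh (hw.continuous.comp (by fun_prop))
  · refine (int_rh ?_).aestronglyMeasurable
    exact (hdc.comp (by fun_prop)).clm_apply continuous_id
  · refine Eventually.of_forall fun z s hs => ?_
    rw [norm_mul, Real.norm_of_nonneg (rh_nonneg z)]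
    rcases le_or_gt 1 ‖z‖ with h | h
    · simp [rh_eq_zero h]
    · refine mul_le_mul_of_nonneg_right ?_ (rh_nonneg z)
      have hs' : |s| ≤ |r| + 1 := by
        have : |s - r| < 1 := by simpa [Real.dist_eq] using hs
        have := abs_sub_abs_le_abs_sub s r
        linarith
      have h1 := hM (p + s • z) (by
        simp [norm_smul]
        calc |s| * ‖z‖ ≤ |s| * 1 := by gcongr
          _ ≤ _ := by linarith)
      calc ‖fderiv ℝ w (p + s • z) z‖ ≤ ‖fderiv ℝ w (p + s • z)‖ * ‖z‖ :=
            ContinuousLinearMap.le_opNorm _ _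
        _ ≤ M * 1 := by gcongr; exact (norm_nonneg _).trans h1
        _ = M := mul_one M
  · exact rh_integrable.const_mul M
  · refine Eventually.of_forall fun z s _ => ?_
    have hl : HasDerivAt (fun s : ℝ => p + s • z) z s := by
      simpa using ((hasDerivAt_id s).smul_const z).const_add p
    exact (((hw.differentiable (by norm_num)) (p + s • z)).hasFDerivAt.comp_hasDerivAt s
      hl).mul_const _

theorem lap_neg (w : EuclideanSpace ℝ (Fin N) → ℝ) (x) : lap (fun y => - w y) x = - lap w x := by
  simp [lap, fderiv_fun_neg]

theorem MV_le {w : EuclideanSpace ℝ (Fin N) → ℝ} (hw : ContDiff ℝ 2 w)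
    (p : EuclideanSpace ℝ (Fin N)) {R B : ℝ} (hR : 0 ≤ R) (hB0 : 0 ≤ B)
    (hB : ∀ z ∈ closedBall p R, -B ≤ lap w z) :
    w p * ∫ z : EuclideanSpace ℝ (Fin N), rh z ≤ (∫ z, w (p + R • z) * rh z)
      + B * R ^ 2 / 2 * ∫ z : EuclideanSpace ℝ (Fin N), rh z := by
  set I := ∫ z : EuclideanSpace ℝ (Fin N), rh z
  have hd : ∀ r, HasDerivAt (fun r : ℝ => (∫ z, w (p + r • z) * rh z) + B * I / 2 * r ^ 2)
      (r * (∫ z, lap w (p + r • z) * sig z) + B * I / 2 * (2 * r)) r := fun r =>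
    (hasDerivAt_V hw p r).add (by simpa using (hasDerivAt_pow 2 r).const_mul (B * I / 2))
  have hm : MonotoneOn (fun r : ℝ => (∫ z, w (p + r • z) * rh z) + B * I / 2 * r ^ 2)
      (Icc 0 R) := by
    refine monotoneOn_of_hasDerivWithinAt_nonneg (convex_Icc 0 R)
      (fun r _ => (hd r).continuousAt.continuousWithinAt) (fun r _ => (hd r).hasDerivWithinAt) ?_
    intro r hr
    rw [interior_Icc] at hr
    have hl : Continuous fun z : EuclideanSpace ℝ (Fin N) => p + r • z := by fun_prop
    have h1 : -(B * I) ≤ ∫ z, lap w (p + r • z) * sig z := by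
      have : -(B * I) = ∫ z : EuclideanSpace ℝ (Fin N), -B * rh z := by
        rw [integral_const_mul]; ring
      rw [this]
      refine integral_mono (rh_integrable.const_mul _) (int_sig ((lap_cont hw).comp hl)) ?_
      intro z
      show -B * rh z ≤ lap w (p + r • z) * sig z
      rcases le_or_gt 1 ‖z‖ with h | h
      · simp [rh_eq_zero h, sig_eq_zero h]
      · have := hB (p + r • z) (by
          simp [norm_smul, abs_of_pos hr.1]
          nlinarith [hr.1, hr.2, norm_nonneg z])
        have h2 := sig_le z
        have h3 := sig_nonneg z
        nlinarith
    nlinarith [hr.1]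
  have := hm (left_mem_Icc.2 hR) (right_mem_Icc.2 hR) hR
  simp only [zero_smul, add_zero, integral_const_mul] at this
  calc w p * I = w p * I + B * I / 2 * 0 ^ 2 := by ring
    _ ≤ _ := this
    _ = _ := by ring

theorem MV_ge {w : EuclideanSpace ℝ (Fin N) → ℝ} (hw : ContDiff ℝ 2 w)
    (p : EuclideanSpace ℝ (Fin N)) {R B : ℝ} (hR : 0 ≤ R) (hB0 : 0 ≤ B)
    (hB : ∀ z ∈ closedBall p R, lap w z ≤ B) :
    (∫ z, w (p + R • z) * rh z) ≤ w p * (∫ z : EuclideanSpace ℝ (Fin N), rh z)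
      + B * R ^ 2 / 2 * ∫ z : EuclideanSpace ℝ (Fin N), rh z := by
  have := MV_le (w := fun y => - w y) hw.neg p hR hB0
    (fun z hz => by rw [lap_neg]; linarith [hB z hz])
  simp only [neg_mul, integral_neg] at this
  linarith

theorem int_affine (f : EuclideanSpace ℝ (Fin N) → ℝ) (q : EuclideanSpace ℝ (Fin N)) {R : ℝ}
    (hR : 0 < R) : ∫ z, f (q + R • z) = (R ^ N)⁻¹ * ∫ y, f y := by
  rw [Measure.integral_comp_smul volume (fun y => f (q + y)) R,
    integral_add_left_eq_self (fun y => f y) q]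
  simp [abs_of_pos hR]

theorem harnack {w : EuclideanSpace ℝ (Fin N) → ℝ} (hw : ContDiff ℝ 2 w)
    (p : EuclideanSpace ℝ (Fin N)) {R B : ℝ} (hR : 0 < R) (hB0 : 0 ≤ B)
    (hB : ∀ z ∈ closedBall p (4 * R), |lap w z| ≤ B) (h0 : ∀ z ∈ closedBall p (4 * R), 0 ≤ w z)
    {q : EuclideanSpace ℝ (Fin N)} (hq : q ∈ closedBall p R) :
    w q ≤ 4 ^ (N + 2) * (w p + B * R ^ 2) := by
  have hqp : dist q p ≤ R := hq
  have h1 := MV_le hw q hR.le hB0 (fun z hz => (abs_le.1 (hB z (by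
    have : dist z q ≤ R := hz
    have := dist_triangle z q p
    rw [mem_closedBall]; linarith))).1)
  have h2 := MV_ge hw p (R := 4 * R) (by positivity) hB0 (fun z hz => (abs_le.1 (hB z hz)).2)
  set I := ∫ z : EuclideanSpace ℝ (Fin N), rh z with hI
  have hIpos : 0 < I := rh_pos
  have e1 : ∫ z, w (q + R • z) * rh z = (R ^ N)⁻¹ * ∫ y, w y * rh (R⁻¹ • (y - q)) := by
    rw [← int_affine _ q hR]; simp [smul_smul, hR.ne']
  have e2 : ∫ z, w (p + (4 * R) • z) * rh z
      = ((4 * R) ^ N)⁻¹ * ∫ y, w y * rh ((4 * R)⁻¹ • (y - p)) := by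
    have h4 : (0:ℝ) < 4 * R := by positivity
    rw [← int_affine _ p h4]; simp only [add_sub_cancel_left, smul_smul, inv_mul_cancel₀ h4.ne',
      one_smul]
  have hIntEq : ∀ (a : EuclideanSpace ℝ (Fin N)) (r : ℝ), 0 < r →
      Integrable (fun y => w y * rh (r⁻¹ • (y - a))) volume := by
    intro a r hr
    refine (hw.continuous.mul (rh_cont.comp (by fun_prop))).integrable_of_hasCompactSupport ?_
    refine HasCompactSupport.mul_left ?_
    refine HasCompactSupport.intro (isCompact_closedBall a r) fun x hx => rh_eq_zero ?_
    rw [mem_closedBall, not_le, dist_eq_norm] at hx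
    rw [norm_smul, norm_inv, Real.norm_of_nonneg hr.le, ← div_eq_inv_mul, le_div_iff₀ hr]
    linarith
  have h3 : ∫ y, w y * rh (R⁻¹ • (y - q)) ≤ 4 / 3 * ∫ y, w y * rh ((4 * R)⁻¹ • (y - p)) := by
    rw [← integral_const_mul]
    refine integral_mono (hIntEq q R hR) ((hIntEq p (4 * R) (by positivity)).const_mul _) ?_
    intro y
    show w y * rh (R⁻¹ • (y - q)) ≤ 4 / 3 * (w y * rh ((4 * R)⁻¹ • (y - p)))
    by_cases hy : y ∈ closedBall p (4 * R)
    · have hw0 := h0 y hy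
      by_cases hyq : dist y q ≤ R
      · have a := rh_le (R⁻¹ • (y - q))
        have b : 3 ≤ rh ((4 * R)⁻¹ • (y - p)) := by
          refine le_rh ?_
          rw [norm_smul, norm_inv, Real.norm_of_nonneg (by positivity), ← div_eq_inv_mul,
            div_le_iff₀ (by positivity), ← dist_eq_norm]
          have := dist_triangle y q p
          linarith
        nlinarith
      · rw [rh_eq_zero (z := R⁻¹ • (y - q))]
        · have := rh_nonneg ((4 * R)⁻¹ • (y - p))
          rw [mul_zero]; positivity
        · rw [norm_smul, norm_inv, Real.norm_of_nonneg hR.le, ← div_eq_inv_mul, le_div_iff₀ hR,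
            ← dist_eq_norm]
          linarith
    · have hy' : 4 * R < dist y p := by simpa using hy
      rw [rh_eq_zero, rh_eq_zero]
      · simp
      · rw [norm_smul, norm_inv, Real.norm_of_nonneg (by positivity), ← div_eq_inv_mul,
            le_div_iff₀ (by positivity), ← dist_eq_norm]
        linarith
      · rw [norm_smul, norm_inv, Real.norm_of_nonneg (by positivity), ← div_eq_inv_mul,
            le_div_iff₀ (by positivity), ← dist_eq_norm]
        have := dist_triangle y q p
        linarith
  have h4 : ∫ z, w (q + R • z) * rh z ≤ 4 / 3 * 4 ^ N * ∫ z, w (p + (4 * R) • z) * rh z := by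
    rw [e1, e2]
    have : (R ^ N)⁻¹ = 4 ^ N * ((4 * R) ^ N)⁻¹ := by
      rw [mul_pow]; field_simp
    rw [this]
    have h5 : (0:ℝ) ≤ 4 ^ N * ((4 * R) ^ N)⁻¹ := by positivity
    nlinarith [mul_le_mul_of_nonneg_left h3 h5]
  have hpN : (1:ℝ) ≤ 4 ^ N := one_le_pow₀ (by norm_num)
  have h6 : w q * I ≤ (4 ^ (N + 2) * (w p + B * R ^ 2)) * I := by
    have hwp : 0 ≤ w p := h0 p (by simp; positivity)
    have hBR : 0 ≤ B * R ^ 2 := by positivity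
    have h7 : w q ≤ 4 / 3 * 4 ^ N * (w p + B * (4 * R) ^ 2 / 2) + B * R ^ 2 / 2 := by
      have : w q * I ≤ (4 / 3 * 4 ^ N * (w p + B * (4 * R) ^ 2 / 2) + B * R ^ 2 / 2) * I := by
        have := mul_le_mul_of_nonneg_left h2 (by positivity : (0:ℝ) ≤ 4 / 3 * 4 ^ N)
        linarith
      exact le_of_mul_le_mul_right this hIpos
    refine mul_le_mul_of_nonneg_right (h7.trans ?_) hIpos.le
    rw [pow_add]
    nlinarith [mul_nonneg (sub_nonneg.2 hpN) hBR, mul_nonneg (by positivity : (0:ℝ) ≤ 4 ^ N) hwp]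
  exact le_of_mul_le_mul_right h6 hIpos
end MV2


section Calc
variable {N : ℕ}

theorem lap_of_hasD2 {v : EuclideanSpace ℝ (Fin N) → ℝ} (hv : ContDiff ℝ 2 v)
    (x : EuclideanSpace ℝ (Fin N)) (f1 f2 : Fin N → ℝ)
    (h : ∀ i, HasD2 (fun s : ℝ => v (x + s • EuclideanSpace.single i 1)) (f1 i) (f2 i)) :
    lap v x = ∑ i, f2 i := by
  rw [lap_eq_DD]
  exact Finset.sum_congr rfl fun i _ => ((hasD2_line hv x _).unique (h i)).2

theorem lap_add {v w : EuclideanSpace ℝ (Fin N) → ℝ} (hv : ContDiff ℝ 2 v) (hw : ContDiff ℝ 2 w)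
    (x : EuclideanSpace ℝ (Fin N)) : lap (fun y => v y + w y) x = lap v x + lap w x := by
  rw [lap_of_hasD2 (hv.add hw) x _ _
    (fun i => (hasD2_line hv x (EuclideanSpace.single i 1)).add (hasD2_line hw x _)),
    Finset.sum_add_distrib]
  rfl

theorem lap_const_mul {v : EuclideanSpace ℝ (Fin N) → ℝ} (hv : ContDiff ℝ 2 v) (c : ℝ)
    (x : EuclideanSpace ℝ (Fin N)) : lap (fun y => c * v y) x = c * lap v x := by
  rw [lap_of_hasD2 (contDiff_const.mul hv) x _ _
    (fun i => (hasD2_line hv x (EuclideanSpace.single i 1)).const_mul c),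
    ← Finset.mul_sum]
  rfl

theorem lap_const (c : ℝ) (x : EuclideanSpace ℝ (Fin N)) : lap (fun _ => c) x = 0 := by
  simp [lap]

theorem lap_sub {v w : EuclideanSpace ℝ (Fin N) → ℝ} (hv : ContDiff ℝ 2 v) (hw : ContDiff ℝ 2 w)
    (x : EuclideanSpace ℝ (Fin N)) : lap (fun y => v y - w y) x = lap v x - lap w x := by
  simp only [sub_eq_add_neg]
  rw [lap_add hv hw.neg, lap_neg]

theorem lap_add_const {v : EuclideanSpace ℝ (Fin N) → ℝ} (hv : ContDiff ℝ 2 v) (c : ℝ)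
    (x : EuclideanSpace ℝ (Fin N)) : lap (fun y => v y + c) x = lap v x := by
  rw [lap_add hv contDiff_const, lap_const, add_zero]

theorem lap_sub_const {v : EuclideanSpace ℝ (Fin N) → ℝ} (hv : ContDiff ℝ 2 v) (c : ℝ)
    (x : EuclideanSpace ℝ (Fin N)) : lap (fun y => v y - c) x = lap v x := by
  rw [lap_sub hv contDiff_const, lap_const, sub_zero]

theorem hasD2_normsq (a ξ : EuclideanSpace ℝ (Fin N)) :
    HasD2 (fun s : ℝ => ‖a + s • ξ‖ ^ 2) (2 * inner ℝ a ξ) (2 * ‖ξ‖ ^ 2) := by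
  refine (HasD2.quad (‖a‖ ^ 2) (2 * inner ℝ a ξ) (‖ξ‖ ^ 2)).congr (Eventually.of_forall fun s => ?_)
  rw [norm_add_sq_real, inner_smul_right, norm_smul, mul_pow, Real.norm_eq_abs, sq_abs]
  ring

theorem lap_normsq (x₀ x : EuclideanSpace ℝ (Fin N)) : lap (fun y => ‖y - x₀‖ ^ 2) x = 2 * N := by
  have hc : ContDiff ℝ 2 fun y : EuclideanSpace ℝ (Fin N) => ‖y - x₀‖ ^ 2 :=
    (contDiff_id.sub contDiff_const).norm_sq ℝ
  rw [lap_of_hasD2 hc x _ (fun i => 2 * ‖EuclideanSpace.single i (1:ℝ)‖ ^ 2) (fun i => by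
    refine (hasD2_normsq (x - x₀) (EuclideanSpace.single i (1:ℝ))).congr
      (Eventually.of_forall fun s => ?_)
    congr 2
    abel)]
  simp; ring

theorem lap_inner (e x : EuclideanSpace ℝ (Fin N)) : lap (fun y => inner ℝ e y) x = 0 := by
  have hc : ContDiff ℝ 2 fun y : EuclideanSpace ℝ (Fin N) => inner ℝ e y := contDiff_const.inner ℝ contDiff_id
  rw [lap_of_hasD2 hc x (fun i => inner ℝ e (EuclideanSpace.single i (1:ℝ))) (fun i => 2 * 0)
    (fun i => by
    refine (HasD2.quad (inner ℝ e x) _ 0).congr (Eventually.of_forall fun s => ?_)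
    simp only [inner_add_right, inner_smul_right]
    ring)]
  simp

theorem lap_inner_sq (e x : EuclideanSpace ℝ (Fin N)) :
    lap (fun y => (inner ℝ e y : ℝ) ^ 2) x = 2 * ‖e‖ ^ 2 := by
  have hc : ContDiff ℝ 2 fun y : EuclideanSpace ℝ (Fin N) => (inner ℝ e y : ℝ) ^ 2 :=
    (contDiff_const.inner ℝ contDiff_id).pow 2
  rw [lap_of_hasD2 hc x (fun i => 2 * inner ℝ e x * inner ℝ e (EuclideanSpace.single i (1:ℝ)))
    (fun i => 2 * (inner ℝ e (EuclideanSpace.single i (1:ℝ))) ^ 2)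
    (fun i => by
    refine (HasD2.quad ((inner ℝ e x : ℝ) ^ 2) _ _).congr (Eventually.of_forall fun s => ?_)
    simp only [inner_add_right, inner_smul_right]
    ring)]
  simp [EuclideanSpace.inner_single_right, EuclideanSpace.real_norm_sq_eq, Finset.mul_sum]

theorem lap_comp_isom {v : EuclideanSpace ℝ (Fin N) → ℝ} (hv : ContDiff ℝ 2 v)
    (x : EuclideanSpace ℝ (Fin N))
    (R : EuclideanSpace ℝ (Fin N) ≃ₗᵢ[ℝ] EuclideanSpace ℝ (Fin N)) (z : EuclideanSpace ℝ (Fin N)) :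
    lap (fun z => v (x + R z)) z = lap v (x + R z) := by
  have hc : ContDiff ℝ 2 fun z => v (x + R z) := hv.comp (contDiff_const.add R.contDiff)
  rw [lap_of_hasD2 hc z _ _ (fun i => (hasD2_line hv (x + R z) (R (EuclideanSpace.single i 1))).congr
    (Eventually.of_forall fun s => by simp [add_assoc])),
    lap_eq_basis hv ((EuclideanSpace.basisFun (Fin N) ℝ).map R)]
  simp

theorem max_principle {w : EuclideanSpace ℝ (Fin N) → ℝ} (hw : ContDiff ℝ 2 w)
    {K O : Set (EuclideanSpace ℝ (Fin N))} (hK : IsCompact K) (hO : IsOpen O) (hOK : O ⊆ K)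
    (hlap : ∀ x ∈ O, 0 < lap w x) {c : ℝ} (hbd : ∀ y ∈ K, y ∉ O → w y ≤ c) :
    ∀ x ∈ K, w x ≤ c := by
  intro x hx
  obtain ⟨z, hz, hmax⟩ := hK.exists_isMaxOn ⟨x, hx⟩ hw.continuous.continuousOn
  by_cases hzO : z ∈ O
  · exfalso
    have : IsLocalMax w z := by
      filter_upwards [hO.mem_nhds hzO] with y hy using hmax (hOK hy)
    linarith [lap_nonpos_of_isLocalMax hw this, hlap z hzO]
  · exact (hmax hx).trans (hbd z hz hzO)

theorem deriv_nonneg_right {f : ℝ → ℝ} {f' d : ℝ} (hf : HasDerivAt f f' 0) (h0 : f 0 = 0)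
    (hd : 0 < d) (hs : ∀ s ∈ Ioc 0 d, 0 ≤ f s) : 0 ≤ f' := by
  have h1 : Tendsto (slope f 0) (𝓝[>] 0) (𝓝 f') :=
    (hasDerivAt_iff_tendsto_slope.1 hf).mono_left (nhdsWithin_mono _ (by
      intro s hs; simpa using (ne_of_gt hs)))
  refine ge_of_tendsto h1 ?_
  filter_upwards [Ioc_mem_nhdsGT hd] with s hs'
  rw [slope_def_field, h0]
  have := hs s hs'
  have := hs'.1
  simp only [sub_zero]; positivity

theorem grad_dir {v : EuclideanSpace ℝ (Fin N) → ℝ} (hv : ContDiff ℝ 2 v)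
    (x : EuclideanSpace ℝ (Fin N)) {d S F : ℝ} (hd : 0 < d) (hF : 0 < F)
    (hS : ∀ z ∈ closedBall x d, |v z| ≤ S) (hL : ∀ z ∈ closedBall x d, |lap v z| ≤ F)
    {e : EuclideanSpace ℝ (Fin N)} (he : ‖e‖ = 1) :
    fderiv ℝ v x e ≤ 2 * N * S / d + 2 * F * d := by
  have hS0 : 0 ≤ S := (abs_nonneg _).trans (hS x (by simp [hd.le]))
  set R := Submodule.reflection (Submodule.span ℝ {e})ᗮ with hR
  set c : ℝ := N * S / d ^ 2 + F with hc
  set Φ : EuclideanSpace ℝ (Fin N) → ℝ := fun z =>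
    (1 / 2) * (v (x + LinearIsometryEquiv.refl ℝ _ z) - v (x + R z)) with hΦ
  set Ψ : EuclideanSpace ℝ (Fin N) → ℝ := fun z =>
    (S / d ^ 2) * ‖z - 0‖ ^ 2 + c * ((2 * d) * inner ℝ e z - inner ℝ e z ^ 2) with hΨ
  have c1 : ContDiff ℝ 2 fun z => v (x + LinearIsometryEquiv.refl ℝ _ z) :=
    hv.comp (contDiff_const.add (LinearIsometryEquiv.contDiff _))
  have c2 : ContDiff ℝ 2 fun z => v (x + R z) := hv.comp (contDiff_const.add R.contDiff)
  have c3 : ContDiff ℝ 2 fun y : EuclideanSpace ℝ (Fin N) => ‖y - 0‖ ^ 2 :=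
    (contDiff_id.sub contDiff_const).norm_sq ℝ
  have c4 : ContDiff ℝ 2 fun y : EuclideanSpace ℝ (Fin N) => (inner ℝ e y : ℝ) :=
    contDiff_const.inner ℝ contDiff_id
  have c5 : ContDiff ℝ 2 fun y : EuclideanSpace ℝ (Fin N) => (inner ℝ e y : ℝ) ^ 2 :=
    (contDiff_const.inner ℝ contDiff_id).pow 2
  have hΦc : ContDiff ℝ 2 Φ := contDiff_const.mul (c1.sub c2)
  have hΨc : ContDiff ℝ 2 Ψ := (contDiff_const.mul c3).add
    (contDiff_const.mul ((contDiff_const.mul c4).sub c5))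
  have lΦ : ∀ z, lap Φ z = (1 / 2) * (lap v (x + z) - lap v (x + R z)) := by
    intro z
    rw [hΦ, lap_const_mul (c1.sub c2), lap_sub c1 c2, lap_comp_isom hv, lap_comp_isom hv]
    simp
  have lΨ : ∀ z, lap Ψ z = - 2 * F := by
    intro z
    rw [hΨ, lap_add (contDiff_const.mul c3) (contDiff_const.mul ((contDiff_const.mul c4).sub c5)),
      lap_const_mul c3, lap_const_mul ((contDiff_const.mul c4).sub c5),
      lap_sub (contDiff_const.mul c4) c5, lap_const_mul c4, lap_normsq, lap_inner, lap_inner_sq, he,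
      hc]
    field_simp; ring
  have hnR : ∀ z, ‖R z‖ = ‖z‖ := fun z => R.norm_map z
  have hmem : ∀ z : EuclideanSpace ℝ (Fin N), ‖z‖ ≤ d → x + z ∈ closedBall x d := by
    intro z hz; simpa using hz
  have hie : ∀ z : EuclideanSpace ℝ (Fin N), ‖z‖ ≤ d → inner ℝ e z ≤ d := by
    intro z hz
    have := real_inner_le_norm e z
    rw [he, one_mul] at this
    exact this.trans hz
  have hc0 : 0 ≤ c := by rw [hc]; positivity
  have key : ∀ z ∈ closedBall (0 : EuclideanSpace ℝ (Fin N)) d ∩ {z | 0 ≤ inner ℝ e z},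
      Φ z - Ψ z ≤ 0 := by
    refine max_principle (hΦc.sub hΨc)
      (O := ball (0 : EuclideanSpace ℝ (Fin N)) d ∩ {z | 0 < inner ℝ e z}) ?_ ?_ ?_ ?_ ?_
    · exact (isCompact_closedBall _ _).inter_right (isClosed_le continuous_const (by fun_prop))
    · exact isOpen_ball.inter (isOpen_lt continuous_const (by fun_prop))
    · exact inter_subset_inter ball_subset_closedBall fun z hz => le_of_lt (a := (0:ℝ)) hz
    · rintro z ⟨hz, -⟩
      have hz' : ‖z‖ ≤ d := by simpa using (mem_ball.1 hz).le
      rw [lap_sub hΦc hΨc, lΦ, lΨ]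
      have a := abs_le.1 (hL _ (hmem z hz'))
      have b := abs_le.1 (hL _ (hmem (R z) (by rw [hnR]; exact hz')))
      linarith [a.1, a.2, b.1, b.2]
    · rintro z ⟨hz, hz0⟩ hzO
      have hz' : ‖z‖ ≤ d := by simpa using hz
      have hz0' : (0:ℝ) ≤ inner ℝ e z := hz0
      have hi := hie z hz'
      have hq : 0 ≤ c * ((2 * d) * inner ℝ e z - inner ℝ e z ^ 2) :=
        mul_nonneg hc0 (by nlinarith)
      by_cases h0 : (inner ℝ e z : ℝ) = 0
      · have : R z = z := by
          rw [hR]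
          exact Submodule.reflection_mem_subspace_eq_self
            (Submodule.mem_orthogonal_singleton_iff_inner_right.2 h0)
        simp only [hΦ, hΨ, this, h0]
        have : 0 ≤ S / d ^ 2 * ‖z - 0‖ ^ 2 := by positivity
        simp at this ⊢
        linarith
      · have hzn : ‖z‖ = d := by
          by_contra hne
          exact hzO ⟨by simpa using lt_of_le_of_ne hz' hne,
            lt_of_le_of_ne hz0' (Ne.symm h0)⟩
        have a := abs_le.1 (hS _ (hmem z hz'))
        have b := abs_le.1 (hS _ (hmem (R z) (by rw [hnR]; exact hz')))
        have hSd : S / d ^ 2 * ‖z - 0‖ ^ 2 = S := by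
          rw [sub_zero, hzn]; field_simp
        simp only [hΦ, hΨ, hSd, LinearIsometryEquiv.coe_refl, id]
        linarith [a.1, a.2, b.1, b.2]
  have hRe : R e = -e := Submodule.reflection_orthogonalComplement_singleton_eq_neg e
  have d1 := (hasD2_line hv x e).hasDerivAt
  have d2 := (hasD2_line hv x (-e)).hasDerivAt
  have d3 := (HasD2.quad 0 (c * (2 * d)) (S / d ^ 2 - c)).hasDerivAt
  have d4 := d3.sub ((d1.sub d2).const_mul (1 / 2))
  have := deriv_nonneg_right d4 (by simp) hd (by
    intro s hs
    have hse : ‖s • e‖ = s := by rw [norm_smul, he, mul_one, Real.norm_of_nonneg hs.1.le]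
    have hin : (inner ℝ e (s • e) : ℝ) = s := by
      rw [inner_smul_right, real_inner_self_eq_norm_sq, he]; simp
    have k := key (s • e) ⟨by simpa [hse] using hs.2, by
      show (0:ℝ) ≤ inner ℝ e (s • e); rw [hin]; exact hs.1.le⟩
    simp only [hΦ, hΨ, sub_zero, hse, hin, map_smul, hRe, LinearIsometryEquiv.coe_refl, id] at k
    simp only [Pi.sub_apply]
    linarith)
  simp only [map_neg] at this
  have hcd : c * (2 * d) = 2 * N * S / d + 2 * F * d := by
    rw [hc]; field_simp
  linarith

theorem grad_est {v : EuclideanSpace ℝ (Fin N) → ℝ} (hv : ContDiff ℝ 2 v)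
    (x : EuclideanSpace ℝ (Fin N)) {d S F : ℝ} (hd : 0 < d) (hF : 0 < F)
    (hS : ∀ z ∈ closedBall x d, |v z| ≤ S) (hL : ∀ z ∈ closedBall x d, |lap v z| ≤ F) :
    ‖fderiv ℝ v x‖ ≤ 2 * N * S / d + 2 * F * d := by
  have hS0 : 0 ≤ S := (abs_nonneg _).trans (hS x (by simp [hd.le]))
  refine ContinuousLinearMap.opNorm_le_bound _ (by positivity) fun y => ?_
  rcases eq_or_ne y 0 with rfl | hy
  · simp
  have hn : 0 < ‖y‖ := norm_pos_iff.2 hy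
  have he : ‖(‖y‖⁻¹ • y)‖ = 1 := by rw [norm_smul]; simp [hn.ne']
  have h1 := grad_dir hv x hd hF hS hL he
  have h2 := grad_dir hv x hd hF hS hL (e := -(‖y‖⁻¹ • y)) (by rw [norm_neg, he])
  rw [map_neg] at h2
  have hy2 : fderiv ℝ v x y = ‖y‖ * fderiv ℝ v x (‖y‖⁻¹ • y) := by
    rw [map_smul, smul_eq_mul]; field_simp
  rw [hy2, norm_mul, norm_norm, mul_comm]
  refine mul_le_mul_of_nonneg_right ?_ hn.le
  rw [Real.norm_eq_abs, abs_le]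
  constructor <;> linarith
end Calc


theorem HasD2.phi {f : ℝ → ℝ} {f1 f2 κ : ℝ} (hf : HasD2 f f1 f2) (h0 : 0 < f 0)
    (h1 : 0 < 1 - κ / 2 * f 0) :
    HasD2 (fun s => Real.log (f s) - Real.log (1 - κ / 2 * f s))
      (f1 / (f 0 * (1 - κ / 2 * f 0)))
      (f2 / (f 0 * (1 - κ / 2 * f 0)) - (1 - κ * f 0) * (f1 / (f 0 * (1 - κ / 2 * f 0))) ^ 2) := by
  have k := (hf.log h0).sub (((HasD2.const 1).sub (hf.const_mul (κ / 2))).log h1)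
  obtain ⟨c, hc⟩ : ∃ c, c = 1 - κ / 2 * f 0 := ⟨_, rfl⟩
  obtain ⟨a, ha⟩ : ∃ a, a = f 0 := ⟨_, rfl⟩
  simp only [← hc] at k h1 ⊢
  rw [← ha] at k h0 ⊢
  have hk : κ * a = 2 * (1 - c) := by rw [hc, ha]; ring
  have hκ : κ = 2 * (1 - c) / a := by field_simp; linarith
  convert k using 1
  · rw [hκ]; field_simp; ring
  · rw [hκ]; field_simp; ring

section TP
variable {N : ℕ}

/-- the two point log functional -/
noncomputable def Zf (v : EuclideanSpace ℝ (Fin N) → ℝ) (κ ε ρ : ℝ) (p x y : EuclideanSpace ℝ (Fin N)) :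
    ℝ :=
  (Real.log (v x - ε) - Real.log (1 - κ / 2 * (v x - ε)))
  + (Real.log (-v y - ε) - Real.log (1 - κ / 2 * (-v y - ε)))
  - Real.log (‖x - y‖ ^ 2) + 2 * Real.log (ρ ^ 2 - ‖(1 / 2 : ℝ) • (x + y) - p‖ ^ 2)

theorem TP_line {v : EuclideanSpace ℝ (Fin N) → ℝ} (hv : ContDiff ℝ 2 v) {κ ε ρ : ℝ}
    {p x y : EuclideanSpace ℝ (Fin N)} {a b η r : ℝ} {D n : EuclideanSpace ℝ (Fin N)}
    (ha : a = v x - ε) (hb : b = - v y - ε) (hη : η = ρ ^ 2 - ‖(1 / 2 : ℝ) • (x + y) - p‖ ^ 2)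
    (hD : D = x - y) (hr : r = ‖D‖) (hn : n = (2 / η) • ((1 / 2 : ℝ) • (x + y) - p))
    (ha0 : 0 < a) (hb0 : 0 < b) (hη0 : 0 < η) (hr0 : 0 < r) (ha1 : 0 < 1 - κ / 2 * a)
    (hb1 : 0 < 1 - κ / 2 * b)
    (hmax : IsLocalMax (fun q : EuclideanSpace ℝ (Fin N) × EuclideanSpace ℝ (Fin N) =>
      Zf v κ ε ρ p q.1 q.2) (x, y)) (ξ ζ : EuclideanSpace ℝ (Fin N)) :
    (fderiv ℝ v x ξ / (a * (1 - κ / 2 * a)) - fderiv ℝ v y ζ / (b * (1 - κ / 2 * b))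
      - 2 * inner ℝ D (ξ - ζ) / r ^ 2 - inner ℝ n (ξ + ζ) = 0) ∧
    (DD v x ξ / (a * (1 - κ / 2 * a)) - (1 - κ * a) * (fderiv ℝ v x ξ / (a * (1 - κ / 2 * a))) ^ 2
      - DD v y ζ / (b * (1 - κ / 2 * b))
      - (1 - κ * b) * (fderiv ℝ v y ζ / (b * (1 - κ / 2 * b))) ^ 2
      - 2 * ‖ξ - ζ‖ ^ 2 / r ^ 2 + 4 * inner ℝ D (ξ - ζ) ^ 2 / r ^ 4
      - ‖ξ + ζ‖ ^ 2 / η - inner ℝ n (ξ + ζ) ^ 2 / 2 ≤ 0) := by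
  set m := (1 / 2 : ℝ) • (x + y) - p with hm
  have A1 := (hasD2_line hv x ξ).sub (HasD2.const ε)
  have B1 := (hasD2_line hv y ζ).neg.sub (HasD2.const ε)
  have A2 := A1.phi (κ := κ) (by simpa [← ha] using ha0) (by simpa [← ha] using ha1)
  have B2 := B1.phi (κ := κ) (by simpa [← hb] using hb0) (by simpa [← hb] using hb1)
  have D1 := (hasD2_normsq D (ξ - ζ)).log (by simp [← hr]; positivity)
  have E1 := ((HasD2.const (ρ ^ 2)).sub (hasD2_normsq m ((1 / 2 : ℝ) • (ξ + ζ)))).log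
    (by simpa [← hη] using hη0)
  have tot := ((A2.add B2).sub D1).add (E1.const_mul 2)
  have hloc : IsLocalMax (fun s : ℝ => Zf v κ ε ρ p (x + s • ξ) (y + s • ζ)) 0 := by
    have hc : Tendsto (fun s : ℝ => (x + s • ξ, y + s • ζ)) (𝓝 0) (𝓝 (x, y)) := by
      have : ContinuousAt (fun s : ℝ => (x + s • ξ, y + s • ζ)) 0 := by fun_prop
      simpa [ContinuousAt] using this
    filter_upwards [hc.eventually hmax] with s hs
    simpa using hs
  have tot2 := tot.congr (h := fun s : ℝ => Zf v κ ε ρ p (x + s • ξ) (y + s • ζ))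
    (Eventually.of_forall fun s => by
      have e1 : x + s • ξ - (y + s • ζ) = D + s • (ξ - ζ) := by rw [hD]; module
      have e2 : (1 / 2 : ℝ) • (x + s • ξ + (y + s • ζ)) - p = m + s • (1 / 2 : ℝ) • (ξ + ζ) := by
        rw [hm]; module
      simp only [Zf, e1, e2])
  obtain ⟨t1, t2⟩ := tot2.of_isLocalMax hloc
  simp only [zero_smul, add_zero, ← ha, ← hb, ← hr, ← hη, sub_zero, zero_sub] at t1 t2
  have hin : inner ℝ n (ξ + ζ) = 2 / η * inner ℝ m (ξ + ζ) := by
    rw [hn, real_inner_smul_left]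
  have hns : ‖(1 / 2 : ℝ) • (ξ + ζ)‖ ^ 2 = ‖ξ + ζ‖ ^ 2 / 4 := by
    rw [norm_smul, mul_pow]; norm_num; ring
  have his : inner ℝ m ((1 / 2 : ℝ) • (ξ + ζ)) = inner ℝ m (ξ + ζ) / 2 := by
    rw [real_inner_smul_right]; ring
  rw [hns, his] at t2
  rw [his] at t1
  rw [hin]
  constructor
  · rw [← t1]; field_simp; ring
  · refine le_trans (le_of_eq ?_) t2
    have hr4 : r ^ 4 = (r ^ 2) ^ 2 := by ring
    rw [hr4]
    generalize fderiv ℝ v x ξ / (a * (1 - κ / 2 * a)) = X1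
    rw [neg_div, neg_div, neg_sq]
    generalize fderiv ℝ v y ζ / (b * (1 - κ / 2 * b)) = X2
    generalize DD v x ξ / (a * (1 - κ / 2 * a)) = X3
    generalize DD v y ζ / (b * (1 - κ / 2 * b)) = X4
    field_simp; ring

theorem TP_sum {v : EuclideanSpace ℝ (Fin N) → ℝ} (hv : ContDiff ℝ 2 v) {κ ε ρ : ℝ}
    {p x y : EuclideanSpace ℝ (Fin N)} {a b η r : ℝ} {D n : EuclideanSpace ℝ (Fin N)}
    (ha : a = v x - ε) (hb : b = - v y - ε) (hη : η = ρ ^ 2 - ‖(1 / 2 : ℝ) • (x + y) - p‖ ^ 2)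
    (hD : D = x - y) (hr : r = ‖D‖) (hn : n = (2 / η) • ((1 / 2 : ℝ) • (x + y) - p))
    (ha0 : 0 < a) (hb0 : 0 < b) (hη0 : 0 < η) (hr0 : 0 < r) (ha1 : 0 < 1 - κ / 2 * a)
    (hb1 : 0 < 1 - κ / 2 * b) (hκ : 0 ≤ κ)
    (hmax : IsLocalMax (fun q : EuclideanSpace ℝ (Fin N) × EuclideanSpace ℝ (Fin N) =>
      Zf v κ ε ρ p q.1 q.2) (x, y)) (hnr : ‖n‖ ≤ 1 / r) :
    lap v x / (a * (1 - κ / 2 * a)) - lap v y / (b * (1 - κ / 2 * b)) + κ * (a + b) / r ^ 2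
      ≤ 4 * ‖n‖ ^ 2 + 4 * N / η := by
  have line := TP_line hv ha hb hη hD hr hn ha0 hb0 hη0 hr0 ha1 hb1 hmax
  set fa := a * (1 - κ / 2 * a)
  set fb := b * (1 - κ / 2 * b)
  set cP : EuclideanSpace ℝ (Fin N) := (2 / r ^ 2) • D + n with hcP
  set cQ : EuclideanSpace ℝ (Fin N) := -(2 / r ^ 2) • D + n with hcQ
  have hP : ∀ ξ, fderiv ℝ v x ξ / fa = inner ℝ cP ξ := by
    intro ξ
    have := (line ξ 0).1
    simp only [map_zero, zero_div, sub_zero, add_zero] at this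
    rw [hcP, inner_add_left, real_inner_smul_left]
    linarith [show 2 * inner ℝ D ξ / r ^ 2 = 2 / r ^ 2 * inner ℝ D ξ by ring]
  have hQ : ∀ ζ, fderiv ℝ v y ζ / fb = - inner ℝ cQ ζ := by
    intro ζ
    have := (line 0 ζ).1
    simp only [map_zero, zero_div, zero_sub, zero_add, inner_neg_right] at this
    rw [hcQ, inner_add_left, real_inner_smul_left]
    linarith [show 2 * -inner ℝ D ζ / r ^ 2 = -(2 / r ^ 2) * inner ℝ D ζ by ring]
  set B := EuclideanSpace.basisFun (Fin N) ℝ with hB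
  set R := Submodule.reflection (Submodule.span ℝ {D})ᗮ with hR
  set B' := B.map R with hB'
  have hB'a : ∀ i, B' i = R (B i) := fun i => by simp [hB']
  have hRx : ∀ ξ, R ξ = ξ - (2 * inner ℝ D ξ / r ^ 2) • D := by
    intro ξ
    rw [hR, Submodule.reflection_orthogonal_apply, Submodule.reflection_singleton_apply, hr]
    simp only [RCLike.ofReal_real_eq_id, id]
    module
  have pars : ∀ (b : OrthonormalBasis (Fin N) ℝ (EuclideanSpace ℝ (Fin N)))
      (c : EuclideanSpace ℝ (Fin N)), ∑ i, inner ℝ c (b i) ^ 2 = ‖c‖ ^ 2 := by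
    intro b c
    rw [← b.sum_sq_norm_inner_left c]
    simp
  have each : ∀ i, DD v x (B i) / fa - (1 - κ * a) * inner ℝ cP (B i) ^ 2
      - DD v y (B' i) / fb - (1 - κ * b) * inner ℝ cQ (B' i) ^ 2
      + 8 / r ^ 4 * inner ℝ D (B i) ^ 2 - 4 / η - (inner ℝ n (B i) ^ 2 + inner ℝ n (B' i) ^ 2)
      ≤ 0 := by
    intro i
    have h := (line (B i) (B' i)).2
    rw [hP, hQ] at h
    have e1 : B i - B' i = (2 * inner ℝ D (B i) / r ^ 2) • D := by
      rw [hB'a, hRx]; abel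
    have e2 : ‖B i - B' i‖ ^ 2 = 4 * inner ℝ D (B i) ^ 2 / r ^ 2 := by
      rw [e1, norm_smul, mul_pow, ← hr, Real.norm_eq_abs, sq_abs]
      field_simp; ring
    have e3 : inner ℝ D (B i - B' i) = 2 * inner ℝ D (B i) := by
      rw [e1, real_inner_smul_right, real_inner_self_eq_norm_sq, ← hr]
      field_simp
    have e4 : ‖B i + B' i‖ ^ 2 / η ≤ 4 / η := by
      gcongr
      have h1 : ‖B i‖ = 1 := B.orthonormal.1 i
      have h2 : ‖B' i‖ = 1 := B'.orthonormal.1 i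
      have := norm_add_le (B i) (B' i)
      rw [h1, h2] at this
      nlinarith [norm_nonneg (B i + B' i)]
    have e5 : inner ℝ n (B i + B' i) ^ 2 / 2 ≤ inner ℝ n (B i) ^ 2 + inner ℝ n (B' i) ^ 2 := by
      rw [inner_add_right]
      nlinarith [sq_nonneg (inner ℝ n (B i) - inner ℝ n (B' i))]
    rw [e2, e3] at h
    have e6 : 8 / r ^ 4 * inner ℝ D (B i) ^ 2 = - (2 * (4 * inner ℝ D (B i) ^ 2 / r ^ 2) / r ^ 2)
        + 4 * (2 * inner ℝ D (B i)) ^ 2 / r ^ 4 := by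
      field_simp; ring
    rw [e6]
    rw [neg_sq] at h
    linarith
  have sum := Finset.sum_nonpos (s := Finset.univ) fun i _ => each i
  simp only [Finset.sum_add_distrib, Finset.sum_sub_distrib, ← Finset.mul_sum, ← Finset.sum_div,
    pars, ← lap_eq_basis hv B, ← lap_eq_basis hv B'] at sum
  simp only [Finset.sum_const, Finset.card_univ, Fintype.card_fin, nsmul_eq_mul, ← hr] at sum
  have hcc : ‖cP‖ ^ 2 + ‖cQ‖ ^ 2 = 8 / r ^ 2 + 2 * ‖n‖ ^ 2 := by
    rw [hcP, hcQ, norm_add_sq_real, norm_add_sq_real, norm_smul, norm_smul, ← hr]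
    simp only [mul_pow, Real.norm_eq_abs, sq_abs, neg_smul, inner_neg_left]
    field_simp; ring
  have hD2 : ‖(2 / r ^ 2) • D‖ = 2 / r := by
    rw [norm_smul, ← hr, Real.norm_of_nonneg (by positivity)]; field_simp
  have hP1 : 1 / r ^ 2 ≤ ‖cP‖ ^ 2 := by
    have h1 : 1 / r ≤ ‖cP‖ := by
      have := norm_sub_le cP n
      rw [hcP, add_sub_cancel_right, hD2, ← hcP] at this
      have : 2 / r = 1 / r + 1 / r := by ring
      linarith
    calc 1 / r ^ 2 = (1 / r) ^ 2 := by ring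
      _ ≤ _ := by gcongr
  have hQ1 : 1 / r ^ 2 ≤ ‖cQ‖ ^ 2 := by
    have h1 : 1 / r ≤ ‖cQ‖ := by
      have := norm_sub_le cQ n
      rw [hcQ, add_sub_cancel_right, neg_smul, norm_neg, hD2, ← neg_smul, ← hcQ] at this
      have : 2 / r = 1 / r + 1 / r := by ring
      linarith
    calc 1 / r ^ 2 = (1 / r) ^ 2 := by ring
      _ ≤ _ := by gcongr
  have k1 : κ * a * (1 / r ^ 2) ≤ κ * a * ‖cP‖ ^ 2 := by gcongr
  have k2 : κ * b * (1 / r ^ 2) ≤ κ * b * ‖cQ‖ ^ 2 := by gcongr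
  have k3 : κ * (a + b) / r ^ 2 = κ * a * (1 / r ^ 2) + κ * b * (1 / r ^ 2) := by ring
  have k4 : 8 / r ^ 4 * r ^ 2 = 8 / r ^ 2 := by field_simp
  have k5 : (N : ℝ) * 4 / η = 4 * N / η := by ring
  rw [k4, k5] at sum
  rw [k3]
  linarith
end TP


set_option maxHeartbeats 1000000 in
theorem TP_alg {a b η r M2 S A ρ nn n : ℝ} (ha : 0 < a) (haS : a ≤ S) (hb : 0 < b) (hbS : b ≤ S)
    (hη : 0 < η) (hηρ : η ≤ ρ ^ 2) (hr : 0 < r) (hA : 0 ≤ A) (hρ : 0 < ρ) (hn : 0 ≤ n)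
    (hG : M2 * r ^ 2 ≤ 4 * a * b * η ^ 2) (hnn0 : 0 ≤ nn) (hnn : nn ≤ 2 * ρ / η)
    (hM : 0 < M2) (hM1 : 16 * A * ρ ^ 4 * S ≤ M2)
    (h : 1 / S * (a + b) / r ^ 2 ≤ A * (2 / a) + A * (2 / b) + 4 * nn ^ 2 + 4 * n / η) :
    M2 ≤ 4 * S ^ 2 * ((16 + 4 * n) * ρ ^ 2) := by
  have hS : 0 < S := ha.trans_le haS
  set C2 := (16 + 4 * n) * ρ ^ 2 with hC2
  have hC2p : 0 < C2 := by positivity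
  have h1 : 4 * nn ^ 2 + 4 * n / η ≤ C2 / η ^ 2 := by
    have e1 : nn ^ 2 ≤ (2 * ρ / η) ^ 2 := by gcongr
    have e2 : n / η ≤ n * ρ ^ 2 / η ^ 2 := by
      rw [div_le_div_iff₀ hη (by positivity)]
      nlinarith [mul_nonneg (mul_nonneg hn hη.le) (sub_nonneg.2 hηρ)]
    have e3 : C2 / η ^ 2 = 4 * (2 * ρ / η) ^ 2 + 4 * (n * ρ ^ 2 / η ^ 2) := by
      rw [hC2]; field_simp; ring
    rw [e3, show 4 * n / η = 4 * (n / η) by ring]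
    linarith
  have h2 : A * (2 / a) + A * (2 / b) ≤ (a + b) / (2 * S * r ^ 2) := by
    have e1 : A * (2 / a) + A * (2 / b) = 2 * A * (a + b) / (a * b) := by field_simp; ring
    rw [e1, div_le_div_iff₀ (by positivity) (by positivity)]
    have e2 : η ^ 2 ≤ ρ ^ 4 := by nlinarith
    have e3 : M2 * r ^ 2 ≤ 4 * (a * b) * ρ ^ 4 := hG.trans (by
      have : 0 ≤ 4 * a * b := by positivity
      nlinarith)
    have e4 : 4 * A * S * r ^ 2 ≤ a * b := by
      have : (4 * A * S * r ^ 2) * (4 * ρ ^ 4) ≤ (a * b) * (4 * ρ ^ 4) := by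
        nlinarith [mul_le_mul_of_nonneg_right hM1 (sq_nonneg r)]
      exact le_of_mul_le_mul_right this (by positivity)
    nlinarith [mul_le_mul_of_nonneg_left e4 (add_pos ha hb).le]
  have h3 : (a + b) * η ^ 2 ≤ 2 * S * C2 * r ^ 2 := by
    have e1 : 1 / S * (a + b) / r ^ 2 = 2 * ((a + b) / (2 * S * r ^ 2)) := by field_simp
    have e2 : (a + b) / (2 * S * r ^ 2) ≤ C2 / η ^ 2 := by linarith
    rw [div_le_div_iff₀ (by positivity) (by positivity)] at e2
    linarith
  have h4 : M2 * r ^ 2 * η ^ 2 ≤ ((a + b) * η ^ 2) ^ 2 := by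
    nlinarith [mul_le_mul_of_nonneg_right hG (sq_nonneg η), sq_nonneg ((a - b) * η ^ 2)]
  have h5 : ((a + b) * η ^ 2) ^ 2 ≤ (2 * S * C2 * r ^ 2) ^ 2 := by gcongr
  have h6 : M2 * η ^ 2 ≤ 4 * S ^ 2 * C2 ^ 2 * r ^ 2 := by
    have : (M2 * η ^ 2) * r ^ 2 ≤ (4 * S ^ 2 * C2 ^ 2 * r ^ 2) * r ^ 2 := by nlinarith
    exact le_of_mul_le_mul_right this (by positivity)
  have h7 : M2 * r ^ 2 ≤ 4 * S ^ 2 * η ^ 2 := hG.trans (by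
    have : a * b ≤ S * S := mul_le_mul haS hbS hb.le hS.le
    nlinarith [mul_le_mul_of_nonneg_right this (sq_nonneg η)])
  have h8 : M2 ^ 2 ≤ (4 * S ^ 2 * C2) ^ 2 := by
    have : M2 ^ 2 * η ^ 2 ≤ (4 * S ^ 2 * C2) ^ 2 * η ^ 2 := by
      have e1 := mul_le_mul_of_nonneg_left h6 hM.le
      have e2 := mul_le_mul_of_nonneg_left h7 (by positivity : 0 ≤ 4 * S ^ 2 * C2 ^ 2)
      calc M2 ^ 2 * η ^ 2 = M2 * (M2 * η ^ 2) := by ring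
        _ ≤ M2 * (4 * S ^ 2 * C2 ^ 2 * r ^ 2) := e1
        _ = 4 * S ^ 2 * C2 ^ 2 * (M2 * r ^ 2) := by ring
        _ ≤ 4 * S ^ 2 * C2 ^ 2 * (4 * S ^ 2 * η ^ 2) := e2
        _ = _ := by ring
    exact le_of_mul_le_mul_right this (by positivity)
  exact le_of_sq_le_sq h8 (by positivity)

/-- threshold constant -/
noncomputable def TPT (n A S r0 : ℝ) : ℝ :=
  4 * S ^ 2 * r0 ^ 2 + 16 * A * (r0 / 2) ^ 4 * S + 4 * S ^ 2 * ((16 + 4 * n) * (r0 / 2) ^ 2)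

/-- two point constant -/
noncomputable def TPC (n A S r0 : ℝ) : ℝ := TPT n A S r0 * (16 / (3 * r0 ^ 2)) ^ 2

section TP2
variable {N : ℕ}

set_option maxHeartbeats 2000000 in
theorem two_point {v : EuclideanSpace ℝ (Fin N) → ℝ} (hv : ContDiff ℝ 2 v)
    {p : EuclideanSpace ℝ (Fin N)} {r0 S A ε : ℝ} (hr0 : 0 < r0) (hS : 0 < S) (hA : 0 ≤ A)
    (hε : 0 < ε) (hbd : ∀ z ∈ closedBall p r0, |v z| ≤ S)
    (hlp : ∀ z ∈ closedBall p r0, ε < v z → -A ≤ lap v z)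
    (hlm : ∀ z ∈ closedBall p r0, v z < -ε → lap v z ≤ A)
    {x y : EuclideanSpace ℝ (Fin N)} (hx : x ∈ closedBall p (r0 / 4))
    (hy : y ∈ closedBall p (r0 / 4)) (hvx : ε < v x) (hvy : v y < -ε) :
    (v x - ε) * (-v y - ε) ≤ TPC N A S r0 * ‖x - y‖ ^ 2 := by
  set ρ := r0 / 2 with hρ
  have hρ0 : 0 < ρ := by positivity
  set κ := 1 / S with hκ
  set g : ℝ → ℝ := fun s => s / (1 - κ / 2 * s) with hg
  set η : EuclideanSpace ℝ (Fin N) × EuclideanSpace ℝ (Fin N) → ℝ := fun q =>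
    ρ ^ 2 - ‖(1 / 2 : ℝ) • (q.1 + q.2) - p‖ ^ 2 with hη
  set G : EuclideanSpace ℝ (Fin N) × EuclideanSpace ℝ (Fin N) → ℝ := fun q =>
    g (v q.1 - ε) * g (-v q.2 - ε) * η q ^ 2 / ‖q.1 - q.2‖ ^ 2 with hGdef
  set K : Set (EuclideanSpace ℝ (Fin N) × EuclideanSpace ℝ (Fin N)) :=
    (closedBall p r0 ×ˢ closedBall p r0) ∩ ({q | ε ≤ v q.1} ∩ ({q | v q.2 ≤ -ε} ∩
      {q | ‖(1 / 2 : ℝ) • (q.1 + q.2) - p‖ ≤ ρ})) with hK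
  have hvc := hv.continuous
  have hKc : IsCompact K := by
    refine ((isCompact_closedBall p r0).prod (isCompact_closedBall p r0)).inter_right ?_
    refine (isClosed_le (by fun_prop) (by fun_prop)).inter
      ((isClosed_le (by fun_prop) (by fun_prop)).inter (isClosed_le (by fun_prop) (by fun_prop)))
  have hg1 : ∀ s, 0 ≤ s → s ≤ S → 1 / 2 ≤ 1 - κ / 2 * s := by
    intro s h0 h1
    have : κ * s ≤ 1 := by rw [hκ, one_div, inv_mul_le_iff₀ hS]; linarith
    linarith
  have hg1' : ∀ s, 0 ≤ s → 1 - κ / 2 * s ≤ 1 := by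
    intro s h0
    have : 0 ≤ κ / 2 * s := by positivity
    linarith
  have hg2 : ∀ s, 0 ≤ s → s ≤ S → g s ≤ 2 * s := by
    intro s h0 h1
    have := hg1 s h0 h1
    simp only [hg]
    rw [div_le_iff₀ (by linarith)]
    nlinarith
  have hg3 : ∀ s, 0 ≤ s → s ≤ S → s ≤ g s := by
    intro s h0 h1
    have := hg1 s h0 h1
    have := hg1' s h0
    simp only [hg]
    rw [le_div_iff₀ (by linarith)]
    nlinarith
  have hKf : ∀ q ∈ K, 0 ≤ v q.1 - ε ∧ v q.1 - ε ≤ S ∧ 0 ≤ -v q.2 - ε ∧ -v q.2 - ε ≤ S ∧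
      0 ≤ η q ∧ η q ≤ ρ ^ 2 ∧ 0 < ‖q.1 - q.2‖ := by
    rintro ⟨q1, q2⟩ ⟨⟨h1, h2⟩, h3, h4, h5⟩
    simp only [mem_ofPred_eq] at h1 h2 h3 h4 h5 ⊢
    have a1 := abs_le.1 (hbd _ h1)
    have a2 := abs_le.1 (hbd _ h2)
    refine ⟨by linarith, by linarith, by linarith, by linarith, ?_, ?_, ?_⟩
    · simp only [hη]
      nlinarith [norm_nonneg ((1 / 2 : ℝ) • (q1 + q2) - p)]
    · simp only [hη]
      nlinarith [norm_nonneg ((1 / 2 : ℝ) • (q1 + q2) - p)]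
    · rw [norm_pos_iff, sub_ne_zero]
      rintro rfl
      linarith
  have hGc : ContinuousOn G K := by
    have : ∀ q ∈ K, 1 - κ / 2 * (v q.1 - ε) ≠ 0 ∧ 1 - κ / 2 * (- v q.2 - ε) ≠ 0 ∧
        ‖q.1 - q.2‖ ^ 2 ≠ 0 := by
      intro q hq
      obtain ⟨h1, h2, h3, h4, -, -, h5⟩ := hKf q hq
      have := hg1 _ h1 h2
      have := hg1 _ h3 h4
      exact ⟨by linarith, by linarith, by positivity⟩
    refine ContinuousOn.div (ContinuousOn.mul (ContinuousOn.mul ?_ ?_) ?_) ?_ (fun q hq => (this q hq).2.2)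
    · exact ContinuousOn.div (by fun_prop) (by fun_prop) (fun q hq => (this q hq).1)
    · exact ContinuousOn.div (by fun_prop) (by fun_prop) (fun q hq => (this q hq).2.1)
    · exact Continuous.continuousOn (by simp only [hη]; fun_prop)
    · exact Continuous.continuousOn (by fun_prop)
  have hx' : dist x p ≤ r0 / 4 := hx
  have hy' : dist y p ≤ r0 / 4 := hy
  have hmid : ‖(1 / 2 : ℝ) • (x + y) - p‖ ≤ r0 / 4 := by
    have e : (1 / 2 : ℝ) • (x + y) - p = (1 / 2 : ℝ) • ((x - p) + (y - p)) := by module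
    rw [e, norm_smul]
    have := norm_add_le (x - p) (y - p)
    rw [← dist_eq_norm, ← dist_eq_norm] at this
    norm_num
    linarith
  have hxyK : (x, y) ∈ K := by
    refine ⟨⟨?_, ?_⟩, hvx.le, hvy.le, ?_⟩
    · exact closedBall_subset_closedBall (by linarith) hx
    · exact closedBall_subset_closedBall (by linarith) hy
    · simp only [mem_ofPred_eq]; linarith
  obtain ⟨⟨x0, y0⟩, hq0, hmaxq⟩ := hKc.exists_isMaxOn ⟨_, hxyK⟩ hGc
  suffices hM : G (x0, y0) ≤ TPT N A S r0 by
    have h1 : G (x, y) ≤ TPT N A S r0 := (hmaxq hxyK).trans hM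
    obtain ⟨f1, f2, f3, f4, f5, f6, f7⟩ := hKf _ hxyK
    have hηl : 3 * r0 ^ 2 / 16 ≤ η (x, y) := by
      simp only [hη, hρ]
      nlinarith [norm_nonneg ((1 / 2 : ℝ) • (x + y) - p)]
    simp only at f1 f2 f3 f4 f7
    have h2 : (v x - ε) * (-v y - ε) * (3 * r0 ^ 2 / 16) ^ 2 / ‖x - y‖ ^ 2 ≤ G (x, y) := by
      simp only [hGdef]
      have i1 := hg3 _ f1 f2
      have i2 := hg3 _ f3 f4
      have i3 := f1.trans i1
      have i4 := f3.trans i2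
      gcongr
    have h3 := h2.trans h1
    rw [div_le_iff₀ (by positivity)] at h3
    have : (v x - ε) * (-v y - ε) = (v x - ε) * (-v y - ε) * (3 * r0 ^ 2 / 16) ^ 2 *
        (16 / (3 * r0 ^ 2)) ^ 2 := by field_simp
    rw [this, TPC]
    have := mul_le_mul_of_nonneg_right h3 (sq_nonneg (16 / (3 * r0 ^ 2)))
    linarith
  by_contra hcon
  push Not at hcon
  set M2 := G (x0, y0) with hM2
  have hT1 : 0 ≤ 16 * A * ρ ^ 4 * S := by positivity
  have hT2 : 0 < 4 * S ^ 2 * r0 ^ 2 := by positivity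
  have hT3 : 0 < 4 * S ^ 2 * ((16 + 4 * (N:ℝ)) * ρ ^ 2) := by positivity
  simp only [TPT, ← hρ] at hcon
  have hM2p : 0 < M2 := by linarith
  obtain ⟨f1, f2, f3, f4, f5, f6, f7⟩ := hKf _ hq0
  simp only at f1 f2 f3 f4 f7
  set a := v x0 - ε with ha
  set b := -v y0 - ε with hb
  set r := ‖x0 - y0‖ with hr
  set η0 := η (x0, y0) with hη0
  have hMeq : M2 = g a * g b * η0 ^ 2 / r ^ 2 := rfl
  have ha0 : 0 < a := by
    refine lt_of_le_of_ne f1 fun h => ?_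
    rw [hMeq, ← h] at hM2p
    simp [hg] at hM2p
  have hb0 : 0 < b := by
    refine lt_of_le_of_ne f3 fun h => ?_
    rw [hMeq, ← h] at hM2p
    simp [hg] at hM2p
  have hη00 : 0 < η0 := by
    refine lt_of_le_of_ne f5 fun h => ?_
    rw [hMeq, ← h] at hM2p
    simp at hM2p
  have hG4 : M2 * r ^ 2 ≤ 4 * a * b * η0 ^ 2 := by
    rw [hMeq, div_mul_cancel₀ _ (by positivity)]
    have e1 := hg2 a f1 f2
    have e2 := hg2 b f3 f4
    have e3 : g a * g b ≤ (2 * a) * (2 * b) :=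
      mul_le_mul e1 e2 (f3.trans (hg3 b f3 f4)) (by positivity)
    calc g a * g b * η0 ^ 2 ≤ (2 * a) * (2 * b) * η0 ^ 2 := by gcongr
      _ = _ := by ring
  have hG5 : M2 * r ^ 2 ≤ (2 * S * η0) ^ 2 := hG4.trans (by
    have : a * b ≤ S * S := mul_le_mul f2 f4 f3 hS.le
    have hh := mul_le_mul_of_nonneg_right this (sq_nonneg η0)
    calc 4 * a * b * η0 ^ 2 = 4 * (a * b * η0 ^ 2) := by ring
      _ ≤ 4 * (S * S * η0 ^ 2) := by linarith
      _ = _ := by ring)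
  have hrη : r * r0 ≤ η0 := by
    have : (2 * S * (r * r0)) ^ 2 ≤ (2 * S * η0) ^ 2 := by
      refine le_trans ?_ hG5
      have hh := mul_le_mul_of_nonneg_right (show 4 * S ^ 2 * r0 ^ 2 ≤ M2 by linarith) (sq_nonneg r)
      calc (2 * S * (r * r0)) ^ 2 = 4 * S ^ 2 * r0 ^ 2 * r ^ 2 := by ring
        _ ≤ _ := hh
    have := le_of_sq_le_sq this (by positivity)
    exact le_of_mul_le_mul_left this (by positivity)
  have hm0 : ‖(1 / 2 : ℝ) • (x0 + y0) - p‖ < ρ := by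
    have : 0 < ρ ^ 2 - ‖(1 / 2 : ℝ) • (x0 + y0) - p‖ ^ 2 := hη00
    exact lt_of_pow_lt_pow_left₀ 2 hρ0.le (by linarith)
  have hrr : r ≤ ρ := by
    have : r * r0 ≤ ρ * r0 := by
      refine hrη.trans (f6.trans ?_)
      rw [hρ]; nlinarith
    exact le_of_mul_le_mul_right this hr0
  have hx0 : x0 ∈ ball p r0 := by
    have e : x0 - p = ((1 / 2 : ℝ) • (x0 + y0) - p) + (1 / 2 : ℝ) • (x0 - y0) := by module
    rw [mem_ball, dist_eq_norm, e]
    have := norm_add_le ((1 / 2 : ℝ) • (x0 + y0) - p) ((1 / 2 : ℝ) • (x0 - y0))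
    rw [norm_smul (1 / 2 : ℝ) (x0 - y0), ← hr] at this
    norm_num at this
    norm_num at hm0
    norm_num
    linarith
  have hy0 : y0 ∈ ball p r0 := by
    have e : y0 - p = ((1 / 2 : ℝ) • (x0 + y0) - p) - (1 / 2 : ℝ) • (x0 - y0) := by module
    rw [mem_ball, dist_eq_norm, e]
    have := norm_sub_le ((1 / 2 : ℝ) • (x0 + y0) - p) ((1 / 2 : ℝ) • (x0 - y0))
    rw [norm_smul (1 / 2 : ℝ) (x0 - y0), ← hr] at this
    norm_num at this
    norm_num at hm0
    norm_num
    linarith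
  have hlogG : ∀ q ∈ K, 0 < v q.1 - ε → 0 < -v q.2 - ε → 0 < η q →
      0 < G q ∧ Zf v κ ε ρ p q.1 q.2 = Real.log (G q) := by
    intro q hq h1 h2 h3
    obtain ⟨k1, k2, k3, k4, k5, k6, k7⟩ := hKf _ hq
    have l1 : 0 < 1 - κ / 2 * (v q.1 - ε) := by linarith [hg1 _ k1 k2]
    have l2 : 0 < 1 - κ / 2 * (- v q.2 - ε) := by linarith [hg1 _ k3 k4]
    constructor
    · simp only [hGdef, hg]; positivity
    · simp only [hGdef, hg]
      rw [Real.log_div (by positivity) (by positivity), Real.log_mul (by positivity) (by positivity),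
        Real.log_mul (by positivity) (by positivity), Real.log_div (by positivity) (by positivity),
        Real.log_div (by positivity) (by positivity), Real.log_pow (η q) 2, Zf]
      simp only [hη]
      push_cast
      ring
  have hloc : IsLocalMax (fun q : EuclideanSpace ℝ (Fin N) × EuclideanSpace ℝ (Fin N) =>
      Zf v κ ε ρ p q.1 q.2) (x0, y0) := by
    have z0 := hlogG _ hq0 ha0 hb0 hη00
    have o1 : ∀ᶠ q : EuclideanSpace ℝ (Fin N) × EuclideanSpace ℝ (Fin N) in 𝓝 (x0, y0),
        0 < v q.1 - ε := (isOpen_lt (by fun_prop) (by fun_prop)).mem_nhds ha0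
    have o2 : ∀ᶠ q : EuclideanSpace ℝ (Fin N) × EuclideanSpace ℝ (Fin N) in 𝓝 (x0, y0),
        0 < -v q.2 - ε := (isOpen_lt (by fun_prop) (by fun_prop)).mem_nhds hb0
    have o3 : ∀ᶠ q : EuclideanSpace ℝ (Fin N) × EuclideanSpace ℝ (Fin N) in 𝓝 (x0, y0),
        0 < η q := (isOpen_lt continuous_const (by simp only [hη]; fun_prop)).mem_nhds hη00
    have o4 : ∀ᶠ q : EuclideanSpace ℝ (Fin N) × EuclideanSpace ℝ (Fin N) in 𝓝 (x0, y0),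
        q ∈ ball p r0 ×ˢ ball p r0 := (isOpen_ball.prod isOpen_ball).mem_nhds ⟨hx0, hy0⟩
    filter_upwards [o1, o2, o3, o4] with q h1 h2 h3 h4
    have hqK : q ∈ K := by
      refine ⟨⟨ball_subset_closedBall h4.1, ball_subset_closedBall h4.2⟩, ?_, ?_, ?_⟩
      · show ε ≤ v q.1; linarith
      · show v q.2 ≤ -ε; linarith
      · show ‖(1 / 2 : ℝ) • (q.1 + q.2) - p‖ ≤ ρ
        have : 0 < ρ ^ 2 - ‖(1 / 2 : ℝ) • (q.1 + q.2) - p‖ ^ 2 := h3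
        exact le_of_sq_le_sq (by linarith) hρ0.le
    have z := hlogG q hqK h1 h2 h3
    rw [z.2]
    refine le_trans (Real.log_le_log z.1 (hmaxq hqK)) (le_of_eq z0.2.symm)
  have ha1 : 1 / 2 ≤ 1 - κ / 2 * a := hg1 a f1 f2
  have hb1 : 1 / 2 ≤ 1 - κ / 2 * b := hg1 b f3 f4
  set n : EuclideanSpace ℝ (Fin N) := (2 / η0) • ((1 / 2 : ℝ) • (x0 + y0) - p) with hn
  have hnn : ‖n‖ ≤ 2 * ρ / η0 := by
    rw [hn, norm_smul, Real.norm_of_nonneg (by positivity)]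
    calc 2 / η0 * ‖(1 / 2 : ℝ) • (x0 + y0) - p‖ ≤ 2 / η0 * ρ := by gcongr
      _ = _ := by ring
  have hnr : ‖n‖ ≤ 1 / r := by
    refine hnn.trans ?_
    rw [div_le_div_iff₀ hη00 f7, hρ]
    linarith
  have sum := TP_sum hv (κ := κ) (ε := ε) (ρ := ρ) (p := p) (x := x0) (y := y0) ha hb
    (hη0 : η0 = ρ ^ 2 - ‖(1 / 2 : ℝ) • (x0 + y0) - p‖ ^ 2) rfl hr hn ha0 hb0 hη00 f7
    (by linarith) (by linarith) (by positivity) hloc hnr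
  have hLx : -A ≤ lap v x0 := hlp x0 (ball_subset_closedBall hx0) (by linarith)
  have hLy : lap v y0 ≤ A := hlm y0 (ball_subset_closedBall hy0) (by linarith)
  have frac : ∀ c t L : ℝ, 0 < c → 1 / 2 ≤ t → -A ≤ L → -(A * (2 / c)) ≤ L / (c * t) := by
    intro c t L hc ht hL
    have h1 : -A / (c * t) ≤ L / (c * t) := by gcongr
    refine le_trans ?_ h1
    rw [neg_div, neg_le_neg_iff, mul_div_assoc', div_le_div_iff₀ (by positivity) hc]
    have : 0 ≤ A * c := by positivity
    nlinarith
  have x1 := frac a _ _ ha0 ha1 hLx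
  have x2 := frac b (1 - κ / 2 * b) (-lap v y0) hb0 hb1 (by linarith)
  rw [neg_div] at x2
  have fin := TP_alg (a := a) (b := b) (η := η0) (r := r) (M2 := M2) (S := S) (A := A) (ρ := ρ)
    (nn := ‖n‖) (n := N) ha0 f2 hb0 f4 hη00 f6 f7 hA hρ0 (by positivity) hG4 (norm_nonneg _) hnn hM2p
    (by linarith) (by linarith)
  linarith
end TP2


section LG
variable {N : ℕ}

theorem expq_contDiff (x : EuclideanSpace ℝ (Fin N)) (μ : ℝ) :
    ContDiff ℝ 2 fun z : EuclideanSpace ℝ (Fin N) => Real.exp (-μ * ‖z - x‖ ^ 2) :=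
  (contDiff_const.mul ((contDiff_id.sub contDiff_const).norm_sq ℝ)).exp

theorem lap_expq (x z : EuclideanSpace ℝ (Fin N)) (μ : ℝ) :
    lap (fun z => Real.exp (-μ * ‖z - x‖ ^ 2)) z
      = Real.exp (-μ * ‖z - x‖ ^ 2) * (4 * μ ^ 2 * ‖z - x‖ ^ 2 - 2 * μ * N) := by
  set E0 := Real.exp (-μ * ‖z - x‖ ^ 2) with hE0
  rw [lap_of_hasD2 (expq_contDiff x μ) z
    (fun i => E0 * (-μ * (2 * inner ℝ (z - x) (EuclideanSpace.single i (1:ℝ)))))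
    (fun i => E0 * (-μ * (2 * ‖EuclideanSpace.single i (1:ℝ)‖ ^ 2)
      + (-μ * (2 * inner ℝ (z - x) (EuclideanSpace.single i (1:ℝ)))) ^ 2))
    (fun i => by
      have h := ((hasD2_normsq (z - x) (EuclideanSpace.single i (1:ℝ))).const_mul (-μ)).exp
      simp only [zero_smul, add_zero, ← hE0] at h
      refine h.congr (Eventually.of_forall fun s => ?_)
      congr 4
      abel)]
  rw [← Finset.mul_sum]
  congr 1
  have : ∑ i, (inner ℝ (z - x) (EuclideanSpace.single i (1:ℝ))) ^ 2 = ‖z - x‖ ^ 2 := by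
    simp [EuclideanSpace.inner_single_right, EuclideanSpace.real_norm_sq_eq]
  rw [Finset.sum_add_distrib, ← this, Finset.mul_sum]
  simp only [EuclideanSpace.norm_single, norm_one, one_pow, Finset.sum_const, Finset.card_univ,
    Fintype.card_fin, nsmul_eq_mul]
  rw [Finset.sum_congr rfl fun i _ => show
    (-μ * (2 * inner ℝ (z - x) (EuclideanSpace.single i (1:ℝ)))) ^ 2
    = 4 * μ ^ 2 * (inner ℝ (z - x) (EuclideanSpace.single i (1:ℝ))) ^ 2 by ring]
  ring

theorem barrier (hN : 1 ≤ N) {w : EuclideanSpace ℝ (Fin N) → ℝ} (hw : ContDiff ℝ 2 w)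
    {x : EuclideanSpace ℝ (Fin N)} {d k A l : ℝ} (hl : l = 256 * N) (hd : 0 < d) (hk : 0 < k)
    (h0 : ∀ z ∈ closedBall x d, 0 ≤ w z) (hL : ∀ z ∈ closedBall x d, lap w z ≤ A)
    (hk1 : ∀ z ∈ closedBall x (d / 16), k ≤ w z)
    (hbig : A * d ^ 2 < k * (2 * N * l * Real.exp (-l)))
    {z : EuclideanSpace ℝ (Fin N)} {s : ℝ} (hs0 : 0 ≤ s) (hs : s ≤ d / 4) (hz : dist z x = d - s) :
    k * Real.exp (-l) * l * s / d ≤ w z := by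
  have hN' : (1:ℝ) ≤ N := by exact_mod_cast hN
  have hl0 : 0 < l := by rw [hl]; positivity
  set μ := l / d ^ 2 with hμ
  have hμ0 : 0 < μ := by positivity
  set β : EuclideanSpace ℝ (Fin N) → ℝ := fun z => k * (Real.exp (-μ * ‖z - x‖ ^ 2) - Real.exp (-l))
    with hβ
  have cE := expq_contDiff x μ
  have cβ : ContDiff ℝ 2 β := contDiff_const.mul (cE.sub contDiff_const)
  have lβ : ∀ z, lap β z = k * (Real.exp (-μ * ‖z - x‖ ^ 2) *
      (4 * μ ^ 2 * ‖z - x‖ ^ 2 - 2 * μ * N)) := by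
    intro z
    rw [hβ, lap_const_mul (cE.sub contDiff_const), lap_sub_const cE, lap_expq]
  have hμd : μ * d ^ 2 = l := by rw [hμ]; field_simp
  have key : ∀ z ∈ closedBall x d ∩ {z | d / 16 ≤ dist z x}, β z - w z ≤ 0 := by
    refine max_principle (cβ.sub hw) (O := ball x d ∩ {z | d / 16 < dist z x}) ?_ ?_ ?_ ?_ ?_
    · exact (isCompact_closedBall _ _).inter_right (isClosed_le continuous_const (by fun_prop))
    · exact isOpen_ball.inter (isOpen_lt continuous_const (by fun_prop))
    · exact inter_subset_inter ball_subset_closedBall fun z hz => le_of_lt (a := d / 16) hz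
    · rintro z ⟨hz1, hz2⟩
      have hz1' : ‖z - x‖ ≤ d := by rw [← dist_eq_norm]; exact (mem_ball.1 hz1).le
      have hz2' : d / 16 ≤ ‖z - x‖ := by
        rw [← dist_eq_norm]; exact le_of_lt (a := d / 16) hz2
      rw [lap_sub cβ hw, lβ]
      have e1 : Real.exp (-l) ≤ Real.exp (-μ * ‖z - x‖ ^ 2) := by
        apply Real.exp_le_exp.2
        rw [← hμd]
        have : ‖z - x‖ ^ 2 ≤ d ^ 2 := by gcongr
        nlinarith
      have e2 : 2 * N * μ ≤ 4 * μ ^ 2 * ‖z - x‖ ^ 2 - 2 * μ * N := by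
        have : (d / 16) ^ 2 ≤ ‖z - x‖ ^ 2 := by gcongr
        have h3 : 4 * μ ^ 2 * (d / 16) ^ 2 ≤ 4 * μ ^ 2 * ‖z - x‖ ^ 2 := by gcongr
        have h4 : 4 * μ ^ 2 * (d / 16) ^ 2 = 4 * μ * N := by
          calc 4 * μ ^ 2 * (d / 16) ^ 2 = μ * (μ * d ^ 2) / 64 := by ring
            _ = 4 * μ * N := by rw [hμd, hl]; ring
        linarith
      have e3 : A < k * (Real.exp (-l) * (2 * N * μ)) := by
        have : A * d ^ 2 < k * (Real.exp (-l) * (2 * N * μ)) * d ^ 2 := by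
          calc A * d ^ 2 < k * (2 * N * l * Real.exp (-l)) := hbig
            _ = k * (Real.exp (-l) * (2 * N * (μ * d ^ 2))) := by rw [hμd]; ring
            _ = _ := by ring
        exact lt_of_mul_lt_mul_right this (by positivity)
      have e4 : k * (Real.exp (-l) * (2 * N * μ)) ≤ k * (Real.exp (-μ * ‖z - x‖ ^ 2) *
          (4 * μ ^ 2 * ‖z - x‖ ^ 2 - 2 * μ * N)) := by gcongr
      have := hL z (ball_subset_closedBall hz1)
      linarith
    · rintro z ⟨hz1, hz2⟩ hzO
      have hz1' : dist z x ≤ d := hz1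
      have hz2' : d / 16 ≤ dist z x := hz2
      by_cases h1 : dist z x < d
      · have h2 : dist z x ≤ d / 16 := by
          by_contra h; push Not at h; exact hzO ⟨h1, h⟩
        have h3 := hk1 z h2
        have h4 : Real.exp (-μ * ‖z - x‖ ^ 2) ≤ 1 := Real.exp_le_one_iff.2 (by
          have : 0 ≤ μ * ‖z - x‖ ^ 2 := by positivity
          linarith)
        have h5 : β z ≤ k * 1 := by
          simp only [hβ]
          have := Real.exp_pos (-l)
          gcongr; linarith
        linarith
      · have h2 : ‖z - x‖ = d := by rw [← dist_eq_norm]; linarith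
        have h3 : β z = 0 := by
          simp only [hβ, h2]
          rw [neg_mul, hμd]; simp
        have := h0 z hz1
        linarith
  have h1 := key z ⟨by rw [mem_closedBall, hz]; linarith, by
    show d / 16 ≤ dist z x
    rw [hz]; linarith⟩
  have h2 : k * Real.exp (-l) * l * s / d ≤ β z := by
    simp only [hβ]
    rw [← dist_eq_norm, hz]
    have e1 : -μ * (d - s) ^ 2 = -l + μ * (2 * d * s - s ^ 2) := by rw [← hμd]; ring
    rw [e1, Real.exp_add]
    have e2 : μ * (2 * d * s - s ^ 2) + 1 ≤ Real.exp (μ * (2 * d * s - s ^ 2)) :=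
      Real.add_one_le_exp _
    have e3 : l * s / d ≤ μ * (2 * d * s - s ^ 2) := by
      have : l * s / d = μ * (d * s) := by rw [hμ]; field_simp
      rw [this]
      gcongr
      nlinarith
    have e4 : Real.exp (-l) * (l * s / d + 1) ≤
        Real.exp (-l) * Real.exp (μ * (2 * d * s - s ^ 2)) := by gcongr; linarith
    calc k * Real.exp (-l) * l * s / d = k * (Real.exp (-l) * (l * s / d + 1) - Real.exp (-l)) := by
          ring
      _ ≤ _ := by gcongr
  linarith

/-- the class of solutions under consideration -/
def Good (v : EuclideanSpace ℝ (Fin N) → ℝ) (p : EuclideanSpace ℝ (Fin N)) (r0 S A ε : ℝ) : Prop :=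
  ContDiff ℝ 2 v ∧ 0 < ε ∧ ∀ z ∈ closedBall p r0, |v z| ≤ S ∧ |lap v z| ≤ 3 * A / ε ∧
    (ε ≤ |v z| → |lap v z| ≤ A)

theorem Good.neg {v : EuclideanSpace ℝ (Fin N) → ℝ} {p : EuclideanSpace ℝ (Fin N)} {r0 S A ε : ℝ}
    (h : Good v p r0 S A ε) : Good (fun z => - v z) p r0 S A ε := by
  refine ⟨h.1.neg, h.2.1, fun z hz => ?_⟩
  rw [lap_neg, abs_neg, abs_neg]
  exact h.2.2 z hz

set_option maxHeartbeats 1000000 in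
theorem linear_growth (hN : 1 ≤ N) {A S r0 : ℝ} (hA : 0 < A) (hS : 0 < S) (hr0 : 0 < r0) :
    ∃ C1 : ℝ, 1 ≤ C1 ∧ ∀ (v : EuclideanSpace ℝ (Fin N) → ℝ) (p : EuclideanSpace ℝ (Fin N)) (ε : ℝ),
      Good v p r0 S A ε → ∀ x ∈ closedBall p (r0 / 32), ∀ y ∈ closedBall p (r0 / 32),
      v y ≤ ε → v x ≤ C1 * (dist x y + ε) := by
  obtain ⟨l, hl⟩ : ∃ l : ℝ, l = 256 * N := ⟨_, rfl⟩
  have hN' : (1:ℝ) ≤ N := by exact_mod_cast hN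
  have hl0 : 0 < l := by rw [hl]; positivity
  obtain ⟨C0, hC0⟩ : ∃ C0 : ℝ, C0 = TPC N A S r0 := ⟨_, rfl⟩
  have hC00 : 0 ≤ C0 := by rw [hC0]; unfold TPC TPT; positivity
  obtain ⟨H, hH⟩ : ∃ H : ℝ, H = 4 ^ (N + 2) := ⟨_, rfl⟩
  have hH0 : 0 < H := by rw [hH]; positivity
  obtain ⟨Q, hQ⟩ : ∃ Q : ℝ, Q = 1 + A * r0 + H * (8 + 25 * C0 + 3 * A) := ⟨_, rfl⟩
  have hQ0 : 0 < Q := by rw [hQ]; positivity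
  refine ⟨H * (Q * (Real.exp l / l) + A * r0) + 1, by
    have : 0 ≤ H * (Q * (Real.exp l / l) + A * r0) := by positivity
    linarith, ?_⟩
  rintro v p ε ⟨hv, hε, hgood⟩ x hx y hy hvy
  by_cases hvx : v x ≤ ε
  · have : 0 ≤ H * (Q * (Real.exp l / l) + A * r0) := by positivity
    have := dist_nonneg (x := x) (y := y)
    nlinarith
  push Not at hvx
  set Zs : Set (EuclideanSpace ℝ (Fin N)) := {z | v z ≤ ε} with hZs
  have hZc : IsClosed Zs := isClosed_le hv.continuous continuous_const
  obtain ⟨y0, hy0, hyd⟩ := hZc.exists_infDist_eq_dist ⟨y, hvy⟩ x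
  set d := dist x y0 with hd
  have hdle : d ≤ dist x y := by rw [← hyd]; exact infDist_le_dist_of_mem hvy
  have hy0' : v y0 ≤ ε := hy0
  have hd0 : 0 < d := by
    rw [hd, dist_pos]; rintro rfl; linarith
  have hx' : dist x p ≤ r0 / 32 := hx
  have hy' : dist y p ≤ r0 / 32 := hy
  have hd2 : d ≤ r0 / 16 := by
    have := dist_triangle_right x y p
    linarith
  have hy0p : dist y0 p ≤ 3 * r0 / 32 := by
    have := dist_triangle_left y0 p x
    linarith
  have hpos : ∀ z ∈ ball x d, ε ≤ v z := by
    intro z hz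
    by_contra h
    push Not at h
    have : infDist x Zs ≤ dist x z := infDist_le_dist_of_mem (show v z ≤ ε from h.le)
    rw [hyd, dist_comm x z] at this
    have : dist z x < d := hz
    linarith
  have hpos' : ∀ z ∈ closedBall x d, ε ≤ v z := by
    intro z hz
    rw [← closure_ball x hd0.ne'] at hz
    exact closure_minimal (t := {z | ε ≤ v z}) hpos (isClosed_le continuous_const hv.continuous) hz
  have hsub : ∀ z ∈ closedBall x d, z ∈ closedBall p r0 := by
    intro z hz
    have h1 : dist z x ≤ d := hz
    have := dist_triangle z x p
    rw [mem_closedBall]; linarith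
  have hLA : ∀ z ∈ closedBall x d, |lap v z| ≤ A := by
    intro z hz
    exact (hgood z (hsub z hz)).2.2 ((hpos' z hz).trans (le_abs_self _))
  set w : EuclideanSpace ℝ (Fin N) → ℝ := fun z => v z - ε with hw
  have hwc : ContDiff ℝ 2 w := hv.sub contDiff_const
  have hlw : ∀ z, lap w z = lap v z := fun z => lap_sub_const hv ε z
  have hw0 : ∀ z ∈ closedBall x d, 0 ≤ w z := fun z hz => by
    have := hpos' z hz; simp only [hw]; linarith
  obtain ⟨k, hk⟩ : ∃ k : ℝ, k = w x / H - A * (d / 16) ^ 2 := ⟨_, rfl⟩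
  have hkw : ∀ q ∈ closedBall x (d / 16), k ≤ w q := by
    intro q hq
    have hq' : dist q x ≤ d / 16 := hq
    have hsub2 : ∀ z ∈ closedBall q (4 * (d / 16)), z ∈ closedBall x d := by
      intro z hz
      have h1 : dist z q ≤ 4 * (d / 16) := hz
      have := dist_triangle z q x
      rw [mem_closedBall]; linarith
    have := harnack hwc q (R := d / 16) (B := A) (by positivity) hA.le
      (fun z hz => by rw [hlw]; exact hLA z (hsub2 z hz)) (fun z hz => hw0 z (hsub2 z hz))
      (q := x) (by rw [mem_closedBall, dist_comm]; exact hq')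
    rw [← hH] at this
    rw [hk, sub_le_iff_le_add, div_le_iff₀ hH0]
    linarith
  have hmain : k * (l * Real.exp (-l)) ≤ Q * (d + ε) := by
    have hQr : A * r0 ≤ Q := by
      rw [hQ]
      have : 0 ≤ H * (8 + 25 * C0 + 3 * A) := by positivity
      linarith
    have hQ1 : 1 ≤ Q := by
      rw [hQ]
      have : 0 ≤ H * (8 + 25 * C0 + 3 * A) := by positivity
      have : 0 ≤ A * r0 := by positivity
      linarith
    have hQH : H * (8 + 25 * C0 + 3 * A) ≤ Q := by
      rw [hQ]
      have : 0 ≤ A * r0 := by positivity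
      linarith
    have hle : 0 ≤ l * Real.exp (-l) := by positivity
    by_cases hk0 : k ≤ 0
    · have : k * (l * Real.exp (-l)) ≤ 0 := mul_nonpos_of_nonpos_of_nonneg hk0 hle
      have : 0 ≤ Q * (d + ε) := by positivity
      linarith
    push Not at hk0
    by_cases hbig : A * d ^ 2 < k * (2 * N * l * Real.exp (-l))
    swap
    · push Not at hbig
      have h1 : k * (l * Real.exp (-l)) ≤ k * (2 * N * l * Real.exp (-l)) := by
        have : k * (2 * N * l * Real.exp (-l)) = (2 * N) * (k * (l * Real.exp (-l))) := by ring
        rw [this]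
        have : 0 ≤ k * (l * Real.exp (-l)) := by positivity
        nlinarith
      have h2 : A * d ^ 2 ≤ A * r0 * d := by
        have : d * d ≤ r0 * d := by gcongr; linarith
        calc A * d ^ 2 = A * (d * d) := by ring
          _ ≤ A * (r0 * d) := by gcongr
          _ = _ := by ring
      calc _ ≤ A * r0 * d := h1.trans (hbig.trans h2)
        _ ≤ Q * d := by gcongr
        _ ≤ Q * (d + ε) := by gcongr; linarith
    obtain ⟨h', hh'⟩ : ∃ h' : ℝ, h' = k * Real.exp (-l) * l / d := ⟨_, rfl⟩
    have hh'd : k * (l * Real.exp (-l)) = h' * d := by rw [hh']; field_simp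
    rw [hh'd]
    by_cases hh1 : h' ≤ 1
    · calc h' * d ≤ 1 * d := by gcongr
        _ ≤ Q * (d + ε) := by nlinarith
    push Not at hh1
    obtain ⟨s, hs⟩ : ∃ s : ℝ, s = min ε d / 4 := ⟨_, rfl⟩
    have hs0 : 0 < s := by rw [hs]; have := lt_min hε hd0; positivity
    have hsd : s ≤ d / 4 := by rw [hs]; have := min_le_right ε d; linarith
    have hsε : s ≤ ε / 4 := by rw [hs]; have := min_le_left ε d; linarith
    set zs : EuclideanSpace ℝ (Fin N) := y0 + (s / d) • (x - y0) with hzs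
    have hzy : dist zs y0 = s := by
      rw [hzs, dist_eq_norm, add_sub_cancel_left, norm_smul, ← dist_eq_norm, ← hd,
        Real.norm_of_nonneg (by positivity)]
      field_simp
    have hzx : dist zs x = d - s := by
      have e : zs - x = (s / d - 1) • (x - y0) := by rw [hzs]; module
      have h1 : s / d - 1 ≤ 0 := by rw [sub_nonpos, div_le_one hd0]; linarith
      rw [dist_eq_norm, e, norm_smul, Real.norm_of_nonpos h1, ← dist_eq_norm, ← hd]
      field_simp
      try ring
    have hwz : h' * s ≤ w zs := by
      have := barrier hN hwc hl hd0 hk0 hw0 (fun z hz => by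
        rw [hlw]; exact (abs_le.1 (hLA z hz)).2) hkw hbig hs0.le hsd hzx
      calc h' * s = k * Real.exp (-l) * l * s / d := by rw [hh']; ring
        _ ≤ _ := this
    have hwz' : s ≤ w zs := by nlinarith
    have hlow : ∀ y' ∈ closedBall y0 (4 * s), -ε - 25 * C0 * s ≤ v y' := by
      intro y' hy'
      have hy'' : dist y' y0 ≤ 4 * s := hy'
      by_contra hc
      push Not at hc
      have hvy' : v y' < -ε := by
        have : 0 ≤ 25 * C0 * s := by positivity
        linarith
      have tp := two_point hv hr0 hS hA.le hε (p := p) (x := zs) (y := y')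
        (fun z hz => (hgood z hz).1)
        (fun z hz h => (abs_le.1 ((hgood z hz).2.2 (h.le.trans (le_abs_self _)))).1)
        (fun z hz h => (abs_le.1 ((hgood z hz).2.2 (by
          have := neg_le_abs (v z); linarith))).2)
        (by
          have := dist_triangle zs y0 p
          rw [mem_closedBall]; linarith)
        (by
          have := dist_triangle y' y0 p
          rw [mem_closedBall]; linarith)
        (by simp only [hw] at hwz'; linarith) hvy'
      rw [← hC0] at tp
      have hdist : ‖zs - y'‖ ≤ 5 * s := by
        rw [← dist_eq_norm]
        have := dist_triangle_right zs y' y0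
        linarith
      have t1 : C0 * ‖zs - y'‖ ^ 2 ≤ C0 * (5 * s) ^ 2 := by gcongr
      have t2 : s * (-v y' - ε) ≤ (v zs - ε) * (-v y' - ε) := by
        refine mul_le_mul_of_nonneg_right hwz' (by linarith)
      have t3 : s * (-v y' - ε) ≤ s * (25 * C0 * s) := by
        calc _ ≤ C0 * (5 * s) ^ 2 := t2.trans (tp.trans t1)
          _ = _ := by ring
      have := le_of_mul_le_mul_left t3 hs0
      linarith
    have hsubs : ∀ z ∈ closedBall y0 (4 * s), z ∈ closedBall p r0 := by
      intro z hz
      have h1 : dist z y0 ≤ 4 * s := hz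
      have := dist_triangle z y0 p
      rw [mem_closedBall]; linarith
    have har := harnack (w := fun z => v z + (ε + 25 * C0 * s)) (hv.add contDiff_const) y0
      (R := s) (B := 3 * A / ε) hs0 (by positivity)
      (fun z hz => by rw [lap_add_const hv]; exact (hgood z (hsubs z hz)).2.1)
      (fun z hz => by have := hlow z hz; linarith) (q := zs) (by rw [mem_closedBall, hzy])
    rw [← hH] at har
    have hF : 3 * A / ε * s ^ 2 ≤ 3 * A * s := by
      rw [div_mul_eq_mul_div, div_le_iff₀ hε]
      have : s * s ≤ s * ε := by gcongr; linarith
      calc 3 * A * s ^ 2 = 3 * A * (s * s) := by ring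
        _ ≤ 3 * A * (s * ε) := by gcongr
        _ = _ := by ring
    have hs1 : h' * s ≤ H * (2 * ε + (25 * C0 + 3 * A) * s) := by
      have a1 : h' * s ≤ v zs + (ε + 25 * C0 * s) := by
        have : 0 ≤ 25 * C0 * s := by positivity
        simp only [hw] at hwz
        linarith
      refine a1.trans (har.trans ?_)
      refine mul_le_mul_of_nonneg_left ?_ hH0.le
      linarith
    have hmm : ε * d ≤ 4 * s * (d + ε) := by
      rw [hs]
      rcases le_total ε d with h | h
      · rw [min_eq_left h]; nlinarith
      · rw [min_eq_right h]; nlinarith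
    have hs2 : (h' * d) * s ≤ (Q * (d + ε)) * s := by
      calc (h' * d) * s = d * (h' * s) := by ring
        _ ≤ d * (H * (2 * ε + (25 * C0 + 3 * A) * s)) := by gcongr
        _ = H * (2 * (ε * d) + (25 * C0 + 3 * A) * (d * s)) := by ring
        _ ≤ H * (2 * (4 * s * (d + ε)) + (25 * C0 + 3 * A) * ((d + ε) * s)) := by
            gcongr; linarith
        _ = (H * (8 + 25 * C0 + 3 * A)) * ((d + ε) * s) := by ring
        _ ≤ Q * ((d + ε) * s) := by gcongr
        _ = _ := by ring
    exact le_of_mul_le_mul_right hs2 hs0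
  have hk2 : k ≤ Q * (Real.exp l / l) * (d + ε) := by
    have e : k = k * (l * Real.exp (-l)) * (Real.exp l / l) := by
      rw [Real.exp_neg]; field_simp
    rw [e]
    calc _ ≤ Q * (d + ε) * (Real.exp l / l) := by gcongr
      _ = _ := by ring
  have hd3 : A * (d / 16) ^ 2 ≤ A * r0 * (d + ε) := by
    have : d * d ≤ r0 * (d + ε) := by
      refine mul_le_mul (by linarith) (by linarith) hd0.le hr0.le
    calc A * (d / 16) ^ 2 = A * (d * d) / 256 := by ring
      _ ≤ A * (d * d) := by
        have : 0 ≤ A * (d * d) := by positivity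
        linarith
      _ ≤ A * (r0 * (d + ε)) := by gcongr
      _ = _ := by ring
  have hwx : w x = H * (k + A * (d / 16) ^ 2) := by rw [hk]; field_simp; ring
  have hwx2 : w x ≤ H * (Q * (Real.exp l / l) + A * r0) * (d + ε) := by
    rw [hwx]
    calc _ ≤ H * (Q * (Real.exp l / l) * (d + ε) + A * r0 * (d + ε)) := by gcongr
      _ = _ := by ring
  have hfin : v x ≤ (H * (Q * (Real.exp l / l) + A * r0) + 1) * (d + ε) := by
    simp only [hw] at hwx2
    linarith
  refine hfin.trans ?_
  gcongr
end LG


section GB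
variable {N : ℕ}

theorem grad_bound (hN : 1 ≤ N) {A S r0 : ℝ} (hA : 0 < A) (hS : 0 < S) (hr0 : 0 < r0) :
    ∃ C : ℝ, 0 < C ∧ ∀ (v : EuclideanSpace ℝ (Fin N) → ℝ) (p : EuclideanSpace ℝ (Fin N)) (ε : ℝ),
      ε ≤ 2 → Good v p r0 S A ε → ‖fderiv ℝ v p‖ ≤ C := by
  obtain ⟨C1, hC1, hlg⟩ := linear_growth hN hA hS hr0
  obtain ⟨r, hr⟩ : ∃ r : ℝ, r = r0 / 32 := ⟨_, rfl⟩
  rw [← hr] at hlg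
  have hr' : 0 < r := by rw [hr]; positivity
  obtain ⟨M, hM⟩ : ∃ M : ℝ, M = 2 + 4 / r := ⟨_, rfl⟩
  have hM0 : 0 < M := by rw [hM]; positivity
  have hN' : (1:ℝ) ≤ N := by exact_mod_cast hN
  have b1 : 0 < 2 * N * S / (r / 2) + 2 * A * (r / 2) := by positivity
  have b2 : 0 < 10 * N * C1 + A * r := by positivity
  have b3 : 0 < 2 * N * (C1 * (1 + 2 * M)) + 3 * A := by positivity
  refine ⟨(2 * N * S / (r / 2) + 2 * A * (r / 2)) + (10 * N * C1 + A * r)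
    + (2 * N * (C1 * (1 + 2 * M)) + 3 * A), by positivity, fun v p ε hε2 hg => ?_⟩
  have hgood := hg.2.2
  have hv := hg.1
  have hε := hg.2.1
  by_cases hca : ∀ z ∈ closedBall p (r / 2), ε < |v z|
  · have := grad_est hv p (d := r / 2) (S := S) (F := A) (by positivity) hA
      (fun z hz => (hgood z (closedBall_subset_closedBall (by linarith) hz)).1)
      (fun z hz => (hgood z (closedBall_subset_closedBall (by linarith) hz)).2.2 (hca z hz).le)
    linarith
  push Not at hca
  obtain ⟨z1, hz1, hz1'⟩ := hca
  have hcomp : IsCompact (closedBall p (r / 2) ∩ {z | |v z| ≤ ε}) :=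
    (isCompact_closedBall _ _).inter_right (isClosed_le hv.continuous.abs continuous_const)
  obtain ⟨y0, hy0, hmin⟩ := hcomp.exists_isMinOn ⟨z1, hz1, hz1'⟩
    (f := fun z => dist z p) (by fun_prop)
  obtain ⟨hy0b, hy0v⟩ := hy0
  simp only [mem_setOf_eq] at hy0v
  rw [mem_closedBall] at hy0b
  have hgr : ∀ z ∈ closedBall p r, |v z| ≤ C1 * (dist z y0 + ε) := by
    intro z hz
    have hy0r : y0 ∈ closedBall p r := by rw [mem_closedBall]; linarith
    have h1 := hlg v p ε hg z hz y0 hy0r (abs_le.1 hy0v).2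
    have h2 := hlg _ p ε hg.neg z hz y0 hy0r (by linarith [(abs_le.1 hy0v).1])
    exact abs_le.2 ⟨by linarith, h1⟩
  obtain ⟨d, hd⟩ : ∃ d : ℝ, d = dist y0 p := ⟨_, rfl⟩
  have hd0 : 0 ≤ d := by rw [hd]; positivity
  rw [← hd] at hy0b
  have hzy : ∀ z R, z ∈ closedBall p R → dist z y0 ≤ R + d := fun z R hz => by
    have := dist_triangle_right z y0 p
    rw [mem_closedBall] at hz
    rw [hd]; linarith
  rcases le_or_gt ε d with hed | hed
  · have hd0' : 0 < d := lt_of_lt_of_le hε hed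
    have := grad_est hv p (d := d / 2) (S := C1 * (5 / 2 * d)) (F := A) (by positivity) hA
      (fun z hz => by
        refine (hgr z (closedBall_subset_closedBall (by linarith) hz)).trans ?_
        have := hzy z _ hz
        gcongr
        linarith)
      (fun z hz => by
        refine (hgood z (closedBall_subset_closedBall (by linarith) hz)).2.2 ?_
        by_contra hc
        have h3 := hmin (a := z) ⟨closedBall_subset_closedBall (by linarith) hz, (not_le.1 hc).le⟩
        simp only [mem_setOf_eq, ← hd] at h3
        rw [mem_closedBall] at hz
        linarith)
    have e : 2 * N * (C1 * (5 / 2 * d)) / (d / 2) + 2 * A * (d / 2) = 10 * N * C1 + A * d := by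
      field_simp; ring
    rw [e] at this
    have : A * d ≤ A * r := by gcongr; linarith
    linarith
  · obtain ⟨R, hR⟩ : ∃ R : ℝ, R = min ε r / 2 := ⟨_, rfl⟩
    have hR0 : 0 < R := by rw [hR]; have := lt_min hε hr'; positivity
    have hRε : R ≤ ε / 2 := by rw [hR]; linarith [min_le_left ε r]
    have hRr : R ≤ r / 2 := by rw [hR]; linarith [min_le_right ε r]
    have hεM : ε ≤ M * R := by
      rw [hM, hR]
      rcases le_total ε r with h | h
      · rw [min_eq_left h]
        have : 0 ≤ 4 / r * (ε / 2) := by positivity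
        linarith
      · rw [min_eq_right h]
        have : 4 / r * (r / 2) = 2 := by field_simp; norm_num
        linarith
    have := grad_est hv p (d := R) (S := C1 * ((1 + 2 * M) * R)) (F := 3 * A / ε) hR0
      (by positivity)
      (fun z hz => by
        refine (hgr z (closedBall_subset_closedBall (by linarith) hz)).trans ?_
        have := hzy z _ hz
        gcongr
        linarith)
      (fun z hz => (hgood z (closedBall_subset_closedBall (by linarith) hz)).2.1)
    have e : 2 * N * (C1 * ((1 + 2 * M) * R)) / R = 2 * N * (C1 * (1 + 2 * M)) := by
      field_simp
    have e2 : 2 * (3 * A / ε) * R ≤ 3 * A := by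
      calc 2 * (3 * A / ε) * R ≤ 2 * (3 * A / ε) * (ε / 2) := by gcongr
        _ = 3 * A := by field_simp
    rw [e] at this
    linarith

end GB


section SB
variable {N : ℕ}

theorem lap_sqrt {v : EuclideanSpace ℝ (Fin N) → ℝ} (hv : ContDiff ℝ 2 v)
    (x : EuclideanSpace ℝ (Fin N)) :
    v x / √(1 + v x ^ 2) * lap v x ≤ lap (fun z => √(1 + v z ^ 2)) x := by
  have hp : ∀ t : ℝ, 0 < 1 + t ^ 2 := fun t => by positivity
  have hc : ContDiff ℝ 2 (fun z => √(1 + v z ^ 2)) :=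
    (contDiff_const.add (hv.pow 2)).sqrt fun z => (hp _).ne'
  have hG : ∀ t : ℝ, HasDerivAt (fun t : ℝ => √(1 + t ^ 2)) (t / √(1 + t ^ 2)) t := fun t => by
    have h1 : HasDerivAt (fun t : ℝ => 1 + t ^ 2) (2 * t) t := by
      simpa using (hasDerivAt_pow 2 t).const_add 1
    convert h1.sqrt (hp t).ne' using 1
    field_simp
  have hG1 : ∀ t : ℝ, HasDerivAt (fun t : ℝ => t / √(1 + t ^ 2))
      ((1 * √(1 + t ^ 2) - t * (t / √(1 + t ^ 2))) / √(1 + t ^ 2) ^ 2) t := fun t =>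
    (hasDerivAt_id t).div (hG t) (Real.sqrt_pos.2 (hp t)).ne'
  have hG2 : ∀ t : ℝ, 0 ≤ (1 * √(1 + t ^ 2) - t * (t / √(1 + t ^ 2))) / √(1 + t ^ 2) ^ 2 := by
    intro t
    have hs := Real.sqrt_pos.2 (hp t)
    have e : 1 * √(1 + t ^ 2) - t * (t / √(1 + t ^ 2)) = 1 / √(1 + t ^ 2) := by
      field_simp
      rw [Real.sq_sqrt (hp t).le]; ring
    rw [e]; positivity
  have key := lap_of_hasD2 hc x _ _ (fun i =>
    (hasD2_line hv x (EuclideanSpace.single i 1)).comp (G := fun t => √(1 + t ^ 2))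
      (Eventually.of_forall hG) (hG1 _))
  rw [key, lap_eq_DD, Finset.mul_sum]
  refine Finset.sum_le_sum fun i _ => ?_
  simp only [zero_smul, add_zero]
  have := mul_nonneg (hG2 (v x)) (sq_nonneg (fderiv ℝ v x (EuclideanSpace.single i 1)))
  linarith

theorem sup_bound {v g : EuclideanSpace ℝ (Fin N) → ℝ} (hv : ContDiff ℝ 2 v) (hg : Continuous g)
    (p : EuclideanSpace ℝ (Fin N)) {R A ε K : ℝ} (hR : 0 < R) (hA : 0 < A) (hε : 0 < ε)
    (hL : ∀ z ∈ closedBall p R, |lap v z| ≤ 3 * A / ε ∧ (ε ≤ |v z| → |lap v z| ≤ A))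
    (hvg : ∀ z ∈ closedBall p R, v z ^ 2 ≤ 2 * g z ^ 2 + 8)
    (hsub : closedBall p R ⊆ ball 0 1)
    (hK : ∫ x in ball (0 : EuclideanSpace ℝ (Fin N)) 1, g x ^ 2 ≤ K) :
    |v p| ≤ 9 + 8 * (R ^ N)⁻¹ * K / (∫ z : EuclideanSpace ℝ (Fin N), rh z) + 3 * A * R ^ 2 / 2 := by
  obtain ⟨I, hI⟩ : ∃ I : ℝ, I = ∫ z : EuclideanSpace ℝ (Fin N), rh z := ⟨_, rfl⟩
  have hI0 : 0 < I := hI ▸ rh_pos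
  have hp : ∀ t : ℝ, 0 < 1 + t ^ 2 := fun t => by positivity
  have hc : ContDiff ℝ 2 (fun z => √(1 + v z ^ 2)) :=
    (contDiff_const.add (hv.pow 2)).sqrt fun z => (hp _).ne'
  have hmv := MV_le hc p (R := R) (B := 3 * A) hR.le (by positivity) (fun z hz => by
    refine le_trans ?_ (lap_sqrt hv z)
    refine (abs_le.1 ?_).1
    rw [abs_mul, abs_div, abs_of_nonneg (Real.sqrt_nonneg _)]
    have hs := Real.sqrt_pos.2 (hp (v z))
    have hs1 : 1 ≤ √(1 + v z ^ 2) := Real.one_le_sqrt.2 (by nlinarith [sq_nonneg (v z)])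
    have hsv : |v z| ≤ √(1 + v z ^ 2) := Real.abs_le_sqrt (by linarith)
    rcases le_or_gt ε |v z| with h | h
    · calc |v z| / √(1 + v z ^ 2) * |lap v z| ≤ 1 * A := by
            gcongr
            · exact (div_le_one hs).2 hsv
            · exact (hL z hz).2 h
        _ ≤ 3 * A := by linarith
    · calc |v z| / √(1 + v z ^ 2) * |lap v z| ≤ ε * (3 * A / ε) := by
            gcongr
            · exact (div_le_self (abs_nonneg _) hs1).trans h.le
            · exact (hL z hz).1
        _ = 3 * A := by field_simp)
  rw [← hI] at hmv
  have hmeas : MeasurableSet (ball (0 : EuclideanSpace ℝ (Fin N)) 1) := measurableSet_ball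
  obtain ⟨F, hF⟩ : ∃ F : EuclideanSpace ℝ (Fin N) → ℝ,
    F = (ball (0 : EuclideanSpace ℝ (Fin N)) 1).indicator (fun x => g x ^ 2) := ⟨_, rfl⟩
  have hF0 : ∀ z, 0 ≤ F z := fun z => by
    rw [hF]; exact indicator_nonneg (fun _ _ => sq_nonneg _) z
  have hFi : Integrable F volume := by
    rw [hF, integrable_indicator_iff hmeas]
    exact ((hg.pow 2).continuousOn.integrableOn_compact (isCompact_closedBall 0 1)).mono_set
      ball_subset_closedBall
  have hFK : ∫ x, F x ≤ K := by rw [hF, integral_indicator hmeas]; exact hK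
  have hFR : Integrable (fun z => F (p + R • z)) volume :=
    (hFi.comp_add_left p).comp_smul hR.ne'
  have h2 : (∫ z, √(1 + v (p + R • z) ^ 2) * rh z) ≤ ∫ z, (9 * rh z + 8 * F (p + R • z)) := by
    refine integral_mono (int_rh ?_) ((rh_integrable.const_mul 9).add (hFR.const_mul 8)) fun z => ?_
    · exact hc.continuous.comp (by fun_prop)
    have h8 : 0 ≤ F (p + R • z) := hF0 _
    rcases le_or_gt 1 ‖z‖ with h | h
    · simp only [rh_eq_zero h]; linarith
    have hz : p + R • z ∈ closedBall p R := by
      rw [mem_closedBall, dist_eq_norm, add_sub_cancel_left, norm_smul, Real.norm_of_nonneg hR.le]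
      nlinarith
    have e : F (p + R • z) = g (p + R • z) ^ 2 := by
      rw [hF]; exact indicator_of_mem (hsub hz) _
    have h3 := hvg _ hz
    have h4 : √(1 + v (p + R • z) ^ 2) ≤ 1 + v (p + R • z) ^ 2 := by
      rw [Real.sqrt_le_left (hp _).le]
      nlinarith [sq_nonneg (v (p + R • z))]
    have h5 := rh_nonneg z
    have h6 := rh_le z
    calc √(1 + v (p + R • z) ^ 2) * rh z ≤ (9 + 2 * F (p + R • z)) * rh z := by
          gcongr; rw [e]; linarith
      _ = 9 * rh z + 2 * F (p + R • z) * rh z := by ring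
      _ ≤ 9 * rh z + 2 * F (p + R • z) * 4 := by gcongr
      _ = _ := by ring
  rw [integral_add (rh_integrable.const_mul 9) (hFR.const_mul 8), integral_const_mul,
    integral_const_mul, ← hI, int_affine F p hR] at h2
  have h3 : |v p| ≤ √(1 + v p ^ 2) := Real.abs_le_sqrt (by linarith)
  have h4 : 8 * ((R ^ N)⁻¹ * ∫ y, F y) ≤ 8 * ((R ^ N)⁻¹ * K) := by gcongr
  rw [← hI]
  have h5 : |v p| * I ≤ √(1 + v p ^ 2) * I := by gcongr
  have h6 : |v p| * I ≤ (9 + 8 * (R ^ N)⁻¹ * K / I + 3 * A * R ^ 2 / 2) * I := by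
    have : (9 + 8 * (R ^ N)⁻¹ * K / I + 3 * A * R ^ 2 / 2) * I
      = 9 * I + 8 * ((R ^ N)⁻¹ * K) + 3 * A * R ^ 2 / 2 * I := by field_simp
    rw [this]; linarith
  exact le_of_mul_le_mul_right h6 hI0

end SB


section MO
variable {N : ℕ}

theorem fderiv_conv {φ g : EuclideanSpace ℝ (Fin N) → ℝ} (hφ : ContDiff ℝ 1 φ)
    (hs : HasCompactSupport φ) (hg : Continuous g) (x e : EuclideanSpace ℝ (Fin N)) :
    fderiv ℝ (convolution φ g (ContinuousLinearMap.lsmul ℝ ℝ) volume) x e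
      = convolution (fun y => fderiv ℝ φ y e) g (ContinuousLinearMap.lsmul ℝ ℝ) volume x := by
  rw [(hs.hasFDerivAt_convolution_left (ContinuousLinearMap.lsmul ℝ ℝ) hφ
    hg.locallyIntegrable x).fderiv]
  have := (hs.fderiv (𝕜 := ℝ)).convolutionExists_left
    ((ContinuousLinearMap.lsmul ℝ ℝ : ℝ →L[ℝ] ℝ →L[ℝ] ℝ).precompL (EuclideanSpace ℝ (Fin N)))
    (hφ.continuous_fderiv (by norm_num)) hg.locallyIntegrable x (μ := volume)
  simp_rw [convolution_def, ContinuousLinearMap.integral_apply this]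
  rfl

theorem lap_conv {φ g : EuclideanSpace ℝ (Fin N) → ℝ} (hφ : ContDiff ℝ 2 φ)
    (hs : HasCompactSupport φ) (hg : Continuous g) (x : EuclideanSpace ℝ (Fin N)) :
    lap (convolution φ g (ContinuousLinearMap.lsmul ℝ ℝ) volume) x
      = ∫ y, g y * lap φ (x - y) := by
  unfold lap
  have h1 : ∀ e : EuclideanSpace ℝ (Fin N), ContDiff ℝ 1 fun y => fderiv ℝ φ y e := fun e =>
    (hφ.fderiv_right (m := 1) (by norm_num)).clm_apply contDiff_const
  have h2 : ∀ e : EuclideanSpace ℝ (Fin N), HasCompactSupport fun y => fderiv ℝ φ y e := fun e =>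
    hs.fderiv_apply (𝕜 := ℝ) e
  have h3 : ∀ e : EuclideanSpace ℝ (Fin N),
      Continuous fun y => fderiv ℝ (fun y => fderiv ℝ φ y e) y e := fun e =>
    ((h1 e).continuous_fderiv (by norm_num)).clm_apply continuous_const
  have h4 : ∀ e : EuclideanSpace ℝ (Fin N),
      HasCompactSupport fun y => fderiv ℝ (fun y => fderiv ℝ φ y e) y e := fun e =>
    (h2 e).fderiv_apply (𝕜 := ℝ) e
  simp_rw [Finset.mul_sum]
  rw [integral_finsetSum]
  · refine Finset.sum_congr rfl fun i _ => ?_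
    simp_rw [fderiv_conv (hφ.of_le (by norm_num)) hs hg]
    rw [show (fun y => convolution (fun y => fderiv ℝ φ y (EuclideanSpace.single i 1)) g
      (ContinuousLinearMap.lsmul ℝ ℝ) volume y) = convolution
        (fun y => fderiv ℝ φ y (EuclideanSpace.single i 1)) g
      (ContinuousLinearMap.lsmul ℝ ℝ) volume from rfl, fderiv_conv (h1 _) (h2 _) hg,
      convolution_lsmul_swap]
    refine integral_congr_ae (Eventually.of_forall fun y => ?_)
    simp only [smul_eq_mul]
    ring
  · intro i _
    refine Continuous.integrable_of_hasCompactSupport ?_ ?_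
    · exact hg.mul ((h3 _).comp (continuous_const.sub continuous_id))
    · refine HasCompactSupport.mul_left ?_
      exact (h4 (EuclideanSpace.single i 1)).comp_homeomorph (Homeomorph.subLeft x)

theorem lap_eq_zero_of_not_tsupport {φ : EuclideanSpace ℝ (Fin N) → ℝ} (hφ : ContDiff ℝ 2 φ)
    {x : EuclideanSpace ℝ (Fin N)} (hx : x ∉ tsupport φ) : lap φ x = 0 := by
  rw [lap_of_hasD2 hφ x (fun _ => 0) (fun _ => 0) (fun i => ?_)]
  · simp
  refine (HasD2.const 0).congr ?_
  have h1 : ∀ᶠ y in 𝓝 x, φ y = 0 := by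
    filter_upwards [(isClosed_tsupport φ).isOpen_compl.mem_nhds hx] with y hy
    exact image_eq_zero_of_notMem_tsupport hy
  have h2 : Tendsto (fun s : ℝ => x + s • (EuclideanSpace.single i (1:ℝ))) (𝓝 0) (𝓝 x) := by
    have : Continuous fun s : ℝ => x + s • (EuclideanSpace.single i (1:ℝ)) := by fun_prop
    simpa using this.tendsto 0
  exact h2.eventually h1

theorem moll {g : EuclideanSpace ℝ (Fin N) → ℝ} {L : NNReal} (hg : LipschitzWith L g)
    {A ε δ : ℝ} (hA : 0 < A) (hε : 0 < ε) (hδ : 0 < δ) (hδ1 : δ ≤ 1 / 16) (hδL : 2 * (L * δ) ≤ ε)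
    (htest : ∀ φ : EuclideanSpace ℝ (Fin N) → ℝ, ContDiff ℝ (⊤ : ℕ∞) φ → HasCompactSupport φ →
          tsupport φ ⊆ ball (0 : EuclideanSpace ℝ (Fin N)) 1 → (∀ x, 0 ≤ φ x) →
          |∫ x in ball (0 : EuclideanSpace ℝ (Fin N)) 1, g x * lap φ x|
            ≤ A * ∫ x in ball (0 : EuclideanSpace ℝ (Fin N)) 1,
                ((1 / ε) * Set.indicator {y | |g y - 1| < ε} (fun _ => (1 : ℝ)) x + 1) * φ x) :
    ∃ w : EuclideanSpace ℝ (Fin N) → ℝ, ContDiff ℝ 2 w ∧ (∀ x, |w x - g x| ≤ L * δ) ∧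
      ∀ x ∈ ball (0 : EuclideanSpace ℝ (Fin N)) (15 / 16), |lap w x| ≤ A * (1 / ε + 1) ∧
        (2 * ε ≤ |w x - 1| → |lap w x| ≤ A) := by
  let f : ContDiffBump (0 : EuclideanSpace ℝ (Fin N)) := ⟨δ / 2, δ, by positivity, by linarith⟩
  have hfr : f.rOut = δ := rfl
  obtain ⟨φ, hφ⟩ : ∃ φ : EuclideanSpace ℝ (Fin N) → ℝ, φ = f.normed volume := ⟨_, rfl⟩
  have hφc : ContDiff ℝ (⊤ : ℕ∞) φ := hφ ▸ f.contDiff_normed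
  have hφ2 : ContDiff ℝ 2 φ := contDiff_infty.1 hφc 2
  have hφs : HasCompactSupport φ := hφ ▸ f.hasCompactSupport_normed
  have hφt : tsupport φ = closedBall 0 δ := by rw [hφ, f.tsupport_normed_eq, hfr]
  have hφ0 : ∀ y, 0 ≤ φ y := fun y => hφ ▸ f.nonneg_normed y
  have hφ1 : ∫ y, φ y = 1 := hφ ▸ f.integral_normed
  have hgc := hg.continuous
  have hlip : ∀ x y, dist y x ≤ δ → |g y - g x| ≤ L * δ := fun x y h => by
    have := hg.dist_le_mul y x
    rw [Real.dist_eq] at this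
    exact this.trans (by gcongr)
  have hclose : ∀ x, |convolution φ g (ContinuousLinearMap.lsmul ℝ ℝ) volume x - g x| ≤ L * δ := by
    intro x
    rw [← Real.dist_eq, hφ]
    refine f.dist_normed_convolution_le hgc.aestronglyMeasurable fun y hy => ?_
    rw [Real.dist_eq]
    exact hlip x y (mem_ball.1 hy).le
  refine ⟨convolution φ g (ContinuousLinearMap.lsmul ℝ ℝ) volume, ?_, hclose, ?_⟩
  · have := hφs.contDiff_convolution_left (ContinuousLinearMap.lsmul ℝ ℝ) (n := 2) (μ := volume)
      (by exact_mod_cast hφ2) hgc.locallyIntegrable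
    exact_mod_cast this
  intro x hx
  rw [mem_ball_zero_iff] at hx
  obtain ⟨ψ, hψ⟩ : ∃ ψ : EuclideanSpace ℝ (Fin N) → ℝ, ψ = fun y => φ (x - y) := ⟨_, rfl⟩
  have hψc : ContDiff ℝ (⊤ : ℕ∞) ψ := hψ ▸ hφc.comp (contDiff_const.sub contDiff_id)
  have hψs : HasCompactSupport ψ := hψ ▸ hφs.comp_homeomorph (Homeomorph.subLeft x)
  have hψz : ∀ y, y ∉ closedBall x δ → ψ y = 0 := fun y hy => by
    rw [hψ]
    refine image_eq_zero_of_notMem_tsupport (f := φ) ?_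
    rw [hφt, mem_closedBall_zero_iff, ← dist_eq_norm, dist_comm]
    exact hy
  have hψt : tsupport ψ ⊆ closedBall x δ := by
    refine closure_minimal ?_ isClosed_closedBall
    intro y hy
    by_contra h
    exact hy (hψz y h)
  have hbb : closedBall x δ ⊆ ball (0 : EuclideanSpace ℝ (Fin N)) 1 := fun y hy => by
    rw [mem_ball_zero_iff]
    rw [mem_closedBall, dist_eq_norm] at hy
    have := norm_le_norm_add_norm_sub' y x
    linarith
  have hψ0 : ∀ y, 0 ≤ ψ y := fun y => by rw [hψ]; exact hφ0 _
  have hψ1 : ∫ y, ψ y = 1 := by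
    rw [hψ, integral_sub_left_eq_self (fun y => φ y) volume x, hφ1]
  have hψi : Integrable ψ volume := hψc.continuous.integrable_of_hasCompactSupport hψs
  have hψ2 : ContDiff ℝ 2 ψ := contDiff_infty.1 hψc 2
  have hlapψ : ∀ y, lap ψ y = lap φ (x - y) := fun y => by
    have := lap_comp_isom hφ2 x (LinearIsometryEquiv.neg ℝ) y
    simp only [LinearIsometryEquiv.coe_neg, ← sub_eq_add_neg] at this
    rw [hψ]; exact this
  have hIntEq : ∫ y in ball (0 : EuclideanSpace ℝ (Fin N)) 1, g y * lap ψ y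
      = lap (convolution φ g (ContinuousLinearMap.lsmul ℝ ℝ) volume) x := by
    rw [lap_conv hφ2 hφs hgc, setIntegral_eq_integral_of_forall_compl_eq_zero]
    · simp_rw [hlapψ]
    · intro y hy
      rw [lap_eq_zero_of_not_tsupport hψ2 (fun h => hy (hbb (hψt h))), mul_zero]
  have ht := htest ψ hψc hψs (hψt.trans hbb) hψ0
  rw [hIntEq] at ht
  have hbound : ∀ c : ℝ, 0 ≤ c → (∀ y ∈ closedBall x δ,
      (1 / ε) * Set.indicator {y | |g y - 1| < ε} (fun _ => (1 : ℝ)) y + 1 ≤ c) →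
      |lap (convolution φ g (ContinuousLinearMap.lsmul ℝ ℝ) volume) x| ≤ A * c := by
    intro c hc0 hc
    refine ht.trans ?_
    gcongr
    calc _ ≤ ∫ y in ball (0 : EuclideanSpace ℝ (Fin N)) 1, c * ψ y := by
          refine integral_mono_of_nonneg (Eventually.of_forall fun y => ?_)
            (hψi.const_mul c).integrableOn (Eventually.of_forall fun y => ?_)
          · have : 0 ≤ Set.indicator {y | |g y - 1| < ε} (fun _ => (1 : ℝ)) y :=
              indicator_nonneg (fun _ _ => zero_le_one) y
            have := hψ0 y
            simp only [Pi.zero_apply]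
            positivity
          · by_cases hy : y ∈ closedBall x δ
            · exact mul_le_mul_of_nonneg_right (hc y hy) (hψ0 y)
            · simp only [hψz y hy, mul_zero, le_refl]
      _ ≤ ∫ y, c * ψ y := setIntegral_le_integral (hψi.const_mul c)
            (Eventually.of_forall fun y => mul_nonneg hc0 (hψ0 y))
      _ = c := by rw [integral_const_mul, hψ1, mul_one]
  refine ⟨hbound _ (by positivity) fun y _ => ?_, fun hw => ?_⟩
  · have : Set.indicator {y | |g y - 1| < ε} (fun _ => (1 : ℝ)) y ≤ 1 :=
      indicator_le_self' (fun _ _ => zero_le_one) y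
    have h2 : 1 / ε * Set.indicator {y | |g y - 1| < ε} (fun _ => (1 : ℝ)) y ≤ 1 / ε * 1 := by
      gcongr
    linarith
  · have := hbound 1 zero_le_one fun y hy => ?_
    · simpa using this
    have hn : y ∉ {y | |g y - 1| < ε} := fun h => by
      have h : |g y - 1| < ε := h
      have h1 := hlip x y (mem_closedBall.1 hy)
      have h2 := hclose x
      have h3 := abs_sub_le (convolution φ g (ContinuousLinearMap.lsmul ℝ ℝ) volume x) (g x) 1
      have h4 := abs_sub_le (g x) (g y) 1
      rw [abs_sub_comm (g x) (g y)] at h4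
      linarith
    rw [indicator_of_notMem hn]; simp

end MO


theorem stmt_10 {N : ℕ} (hN : 2 ≤ N) (A K : ℝ) (hA : 0 < A) (hK : 0 < K) :
    ∃ C > (0 : ℝ), ∀ ε : ℝ, ε ∈ Set.Ioc (0 : ℝ) 1 →
      ∀ u : EuclideanSpace ℝ (Fin N) → ℝ,
        (∃ L : NNReal, LipschitzOnWith L u (ball (0 : EuclideanSpace ℝ (Fin N)) 1)) →
        (∫ x in ball (0 : EuclideanSpace ℝ (Fin N)) 1, (u x) ^ 2) ≤ K →
        (∀ φ : EuclideanSpace ℝ (Fin N) → ℝ, ContDiff ℝ (⊤ : ℕ∞) φ → HasCompactSupport φ →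
          tsupport φ ⊆ ball (0 : EuclideanSpace ℝ (Fin N)) 1 → (∀ x, 0 ≤ φ x) →
          (∫ x in ball (0 : EuclideanSpace ℝ (Fin N)) 1, u x * lap φ x)
            ≤ A * ∫ x in ball (0 : EuclideanSpace ℝ (Fin N)) 1,
                ((1 / ε) * Set.indicator {y | |u y - 1| < ε} (fun _ => (1 : ℝ)) x + 1) * φ x
          ∧ -(∫ x in ball (0 : EuclideanSpace ℝ (Fin N)) 1, u x * lap φ x)
            ≤ A * ∫ x in ball (0 : EuclideanSpace ℝ (Fin N)) 1,
                ((1 / ε) * Set.indicator {y | |u y - 1| < ε} (fun _ => (1 : ℝ)) x + 1) * φ x) →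
        ∀ᵐ x ∂volume, x ∈ ball (0 : EuclideanSpace ℝ (Fin N)) (1 / 2) →
          ‖gradient u x‖ ≤ C := by
  obtain ⟨S, hSdef⟩ : ∃ S : ℝ, S = 9 + 8 * ((1 / 8 : ℝ) ^ N)⁻¹ * K /
      (∫ z : EuclideanSpace ℝ (Fin N), rh z) + 3 * (2 * A) * (1 / 8) ^ 2 / 2 := ⟨_, rfl⟩
  have hI0 : 0 < ∫ z : EuclideanSpace ℝ (Fin N), rh z := rh_pos
  have hS : 0 < S := by rw [hSdef]; positivity
  obtain ⟨C, hC, hgb⟩ := grad_bound (N := N) (by omega) (A := 2 * A) (S := S) (r0 := 1 / 4)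
    (by positivity) hS (by norm_num)
  refine ⟨C, hC, ?_⟩
  rintro ε ⟨hε, hε1⟩ u ⟨L, hu⟩ huK htest
  obtain ⟨g, hg, hug⟩ := hu.extend_real
  have hmeas : MeasurableSet (ball (0 : EuclideanSpace ℝ (Fin N)) 1) := measurableSet_ball
  have hgK : ∫ x in ball (0 : EuclideanSpace ℝ (Fin N)) 1, g x ^ 2 ≤ K := by
    rw [← setIntegral_congr_fun hmeas (f := fun x => u x ^ 2) (fun x hx => by
      simp only [hug hx])]
    exact huK
  have htest' : ∀ φ : EuclideanSpace ℝ (Fin N) → ℝ, ContDiff ℝ (⊤ : ℕ∞) φ → HasCompactSupport φ →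
          tsupport φ ⊆ ball (0 : EuclideanSpace ℝ (Fin N)) 1 → (∀ x, 0 ≤ φ x) →
          |∫ x in ball (0 : EuclideanSpace ℝ (Fin N)) 1, g x * lap φ x|
            ≤ A * ∫ x in ball (0 : EuclideanSpace ℝ (Fin N)) 1,
                ((1 / ε) * Set.indicator {y | |g y - 1| < ε} (fun _ => (1 : ℝ)) x + 1) * φ x := by
    intro φ h1 h2 h3 h4
    have h := htest φ h1 h2 h3 h4
    have e1 : ∫ x in ball (0 : EuclideanSpace ℝ (Fin N)) 1, u x * lap φ x
        = ∫ x in ball (0 : EuclideanSpace ℝ (Fin N)) 1, g x * lap φ x :=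
      setIntegral_congr_fun hmeas fun x hx => by simp only [hug hx]
    have e2 : ∫ x in ball (0 : EuclideanSpace ℝ (Fin N)) 1,
          ((1 / ε) * Set.indicator {y | |u y - 1| < ε} (fun _ => (1 : ℝ)) x + 1) * φ x
        = ∫ x in ball (0 : EuclideanSpace ℝ (Fin N)) 1,
          ((1 / ε) * Set.indicator {y | |g y - 1| < ε} (fun _ => (1 : ℝ)) x + 1) * φ x :=
      setIntegral_congr_fun hmeas fun x hx => by
        have : Set.indicator {y | |u y - 1| < ε} (fun _ => (1 : ℝ)) x
            = Set.indicator {y | |g y - 1| < ε} (fun _ => (1 : ℝ)) x := by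
          classical
          rw [indicator_apply, indicator_apply]
          refine if_congr ?_ rfl rfl
          show |u x - 1| < ε ↔ |g x - 1| < ε
          rw [hug hx]
        simp only [this]
    rw [e1, e2] at h
    exact abs_le'.2 h
  have hlip : ∀ x ∈ ball (0 : EuclideanSpace ℝ (Fin N)) (1 / 2),
      ∀ y ∈ ball (0 : EuclideanSpace ℝ (Fin N)) (1 / 2), |g x - g y| ≤ C * ‖x - y‖ := by
    intro x hx y hy
    refine le_of_forall_pos_le_add fun η hη => ?_
    obtain ⟨δ, hδ, hδ1, hδε, hδη⟩ : ∃ δ : ℝ, 0 < δ ∧ δ ≤ 1 / 16 ∧ 2 * (L * δ) ≤ ε ∧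
        2 * (L * δ) ≤ η := by
      have hL0 : (0:ℝ) ≤ L := L.2
      have hm := lt_min hε hη
      refine ⟨min (1 / 16) (min ε η / (2 * (L + 1))), lt_min (by norm_num) (by positivity),
        min_le_left _ _, ?_⟩
      have h1 : 2 * ((L : ℝ) * min (1 / 16) (min ε η / (2 * (L + 1)))) ≤ min ε η := by
        calc 2 * ((L : ℝ) * min (1 / 16) (min ε η / (2 * (L + 1))))
            ≤ 2 * (((L : ℝ) + 1) * (min ε η / (2 * (L + 1)))) := by
              gcongr
              · linarith
              · exact min_le_right _ _
          _ = min ε η := by field_simp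
      exact ⟨h1.trans (min_le_left _ _), h1.trans (min_le_right _ _)⟩
    obtain ⟨w, hw, hwg, hwl⟩ := moll hg hA hε hδ hδ1 hδε htest'
    have hv : ContDiff ℝ 2 (fun z => w z - 1) := hw.sub contDiff_const
    have hlv : ∀ z, lap (fun z => w z - 1) z = lap w z := lap_sub_const hw 1
    have hLv : ∀ z ∈ ball (0 : EuclideanSpace ℝ (Fin N)) (15 / 16),
        |lap (fun z => w z - 1) z| ≤ 3 * (2 * A) / (2 * ε) ∧
        (2 * ε ≤ |w z - 1| → |lap (fun z => w z - 1) z| ≤ 2 * A) := by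
      intro z hz
      rw [hlv]
      refine ⟨(hwl z hz).1.trans ?_, fun h => ((hwl z hz).2 h).trans (by linarith)⟩
      rw [le_div_iff₀ (by positivity)]
      have : A * (1 / ε + 1) * (2 * ε) = 2 * A * (1 + ε) := by field_simp
      rw [this]
      nlinarith
    have hsup : ∀ z ∈ ball (0 : EuclideanSpace ℝ (Fin N)) (3 / 4), |w z - 1| ≤ S := by
      intro z hz
      have hsub : ∀ z' ∈ closedBall z (1 / 8 : ℝ), ‖z'‖ < 7 / 8 := fun z' hz' => by
        rw [mem_closedBall, dist_eq_norm] at hz'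
        rw [mem_ball_zero_iff] at hz
        have := norm_le_norm_add_norm_sub' z' z
        linarith
      rw [hSdef]
      refine sup_bound (v := fun z => w z - 1) hv hg.continuous z (R := 1 / 8) (A := 2 * A)
        (ε := 2 * ε) (K := K) (by norm_num) (by positivity) (by positivity)
        (fun z' hz' => hLv z' ?_) (fun z' hz' => ?_) (fun z' hz' => ?_) hgK
      · rw [mem_ball_zero_iff]; linarith [hsub z' hz']
      · have h1 := abs_le.1 ((hwg z').trans (by linarith : (L : ℝ) * δ ≤ 1))
        have e : w z' - 1 = g z' + (w z' - g z' - 1) := by ring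
        rw [e]
        obtain ⟨t, ht⟩ : ∃ t : ℝ, t = w z' - g z' - 1 := ⟨_, rfl⟩
        rw [← ht]
        have a1 : -2 ≤ t := by linarith
        have a2 : t ≤ 2 := by linarith
        nlinarith [sq_nonneg (g z' - t)]
      · rw [mem_ball_zero_iff]; linarith [hsub z' hz']
    have hfd : ∀ p ∈ ball (0 : EuclideanSpace ℝ (Fin N)) (1 / 2), ‖fderiv ℝ w p‖ ≤ C := by
      intro p hp
      rw [mem_ball_zero_iff] at hp
      have := hgb (fun z => w z - 1) p (2 * ε) (by linarith) ⟨hv, by positivity, fun z hz => ?_⟩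
      · rwa [fderiv_sub_const] at this
      have hz1 : ‖z‖ < 3 / 4 := by
        rw [mem_closedBall, dist_eq_norm] at hz
        have := norm_le_norm_add_norm_sub' z p
        linarith
      refine ⟨hsup z (by rwa [mem_ball_zero_iff]), hLv z ?_⟩
      rw [mem_ball_zero_iff]; linarith
    have hw1 := (convex_ball (0 : EuclideanSpace ℝ (Fin N)) (1 / 2)).norm_image_sub_le_of_norm_fderiv_le
      (𝕜 := ℝ) (f := w) (fun z _ => (hw.differentiable (by norm_num)) z) hfd hy hx
    rw [Real.norm_eq_abs] at hw1
    have h1 := hwg x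
    have h2 := hwg y
    have e : g x - g y = -(w x - g x) + (w x - w y) + (w y - g y) := by ring
    rw [e]
    have h3 := abs_add_three (-(w x - g x)) (w x - w y) (w y - g y)
    rw [abs_neg] at h3
    linarith
  refine Eventually.of_forall fun x hx => ?_
  have hlu : LipschitzOnWith C.toNNReal u (ball (0 : EuclideanSpace ℝ (Fin N)) (1 / 2)) := by
    refine LipschitzOnWith.of_dist_le_mul fun a ha b hb => ?_
    have hs : ball (0 : EuclideanSpace ℝ (Fin N)) (1 / 2) ⊆ ball 0 1 := ball_subset_ball (by norm_num)
    rw [hug (hs ha), hug (hs hb), Real.dist_eq, dist_eq_norm, Real.coe_toNNReal _ hC.le]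
    exact hlip a ha b hb
  have := norm_fderiv_le_of_lipschitzOn ℝ (isOpen_ball.mem_nhds hx) hlu
  rw [Real.coe_toNNReal _ hC.le] at this
  unfold gradient
  rwa [LinearIsometryEquiv.norm_map]
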